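/- Let n > r+t, r ≥ 3, t ≥ 1, t < 2^r - r - 1. If F ⊆ 2^[n] is a non-trivial r-wise t-agreeing family with |F| = (r+t+1)·2^(n-r-t), then there exist a set A ⊆ [n] with |A| = r+t and a set R ⊆ A such that F = {F Δ R : F ⊆ [n], |F ∩ A| ≤ 1}. -/

import Mathlib

open Finset
open scoped symmDiff

def agreeSet {n r : ℕ} (f : Fin r → Finset (Fin n)) : Finset (Fin n) :=
  Finset.univ.filter (fun x => (∀ i, x ∈ f i) ∨ (∀ i, x ∉ f i))

def AgreeingFamily (n r t : ℕ) (F : Finset (Finset (Fin n))) : Prop :=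
  ∀ f : Fin r → Finset (Fin n), (∀ i, f i ∈ F) → t ≤ (agreeSet f).card

def NonTrivialFamily (n : ℕ) (F : Finset (Finset (Fin n))) : Prop :=
  (∀ x : Fin n, ∃ A ∈ F, x ∉ A) ∧ (∀ x : Fin n, ∃ A ∈ F, x ∈ A)

set_option linter.unusedSectionVars false


section Kneser
open scoped Pointwise

variable {G : Type*} [AddCommGroup G] [DecidableEq G]

def StabBy (C : Finset G) (H : Finset G) : Prop := ∀ c ∈ C, ∀ h ∈ H, c + h ∈ C

def IsSubgp (H : Finset G) : Prop := 0 ∈ H ∧ (∀ x ∈ H, ∀ y ∈ H, x - y ∈ H)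

lemma IsSubgp.neg {H : Finset G} (hH : IsSubgp H) {x : G} (hx : x ∈ H) : -x ∈ H := by
  simpa using hH.2 0 hH.1 x hx

lemma IsSubgp.add {H : Finset G} (hH : IsSubgp H) {x y : G} (hx : x ∈ H) (hy : y ∈ H) :
    x + y ∈ H := by
  simpa using hH.2 x hx (-y) (hH.neg hy)

lemma IsSubgp.inter {H K : Finset G} (hH : IsSubgp H) (hK : IsSubgp K) : IsSubgp (H ∩ K) := by
  refine ⟨by simp [hH.1, hK.1], ?_⟩
  intro x hx y hy
  simp only [mem_inter] at *
  exact ⟨hH.2 x hx.1 y hy.1, hK.2 x hx.2 y hy.2⟩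

lemma StabBy.iff {C H : Finset G} (hC : StabBy C H) (hH : IsSubgp H) {c h : G} (hh : h ∈ H) :
    c + h ∈ C ↔ c ∈ C := by
  constructor
  · intro h1
    simpa using hC _ h1 _ (hH.neg hh)
  · intro h1; exact hC c h1 h hh

/-- counting in one double coset -/
lemma kn_count {C1 C2 H1 H2 : Finset G} (h1 : IsSubgp H1) (h2 : IsSubgp H2)
    (s1 : StabBy C1 H1) (s2 : StabBy C2 H2) (z : G) :
    (H1.filter (fun u => z + u ∈ C2)).card * (H2.card - (H2.filter (fun v => z + v ∈ C1)).card)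
      ≤ (H1 ∩ H2).card * (C2 \ C1).card := by
  have e : H2.card - (H2.filter (fun v => z + v ∈ C1)).card
      = (H2.filter (fun v => ¬ z + v ∈ C1)).card := by
    have := Finset.card_filter_add_card_filter_not (s := H2) (fun v => z + v ∈ C1)
    omega
  rw [e, ← card_product]
  apply Finset.card_le_mul_card_image_of_maps_to (f := fun p : G × G => z + p.1 + p.2)
  · rintro ⟨u, v⟩ hp
    simp only [mem_product, mem_filter] at hp
    simp only [mem_sdiff]
    constructor
    · exact (s2.iff h2 hp.2.1).2 hp.1.2
    · rw [add_right_comm]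
      intro h
      exact hp.2.2 ((s1.iff h1 hp.1.1).1 h)
  · intro y hy
    by_cases hne : (filter (fun a : G × G => z + a.1 + a.2 = y)
        (filter (fun u => z + u ∈ C2) H1 ×ˢ filter (fun v => z + v ∉ C1) H2)).Nonempty
    · obtain ⟨⟨u0, v0⟩, hp0⟩ := hne
      simp only [mem_filter, mem_product] at hp0
      apply Finset.card_le_card_of_injOn (fun p => p.1 - u0)
      · rintro ⟨u, v⟩ hp
        simp only [coe_filter, mem_product, mem_filter, Set.mem_ofPred_eq] at hp
        simp only [coe_inter, Set.mem_inter_iff, mem_coe]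
        refine ⟨h1.2 _ hp.1.1.1 _ hp0.1.1.1, ?_⟩
        have : u - u0 = v0 - v := by
          have := hp.2.trans hp0.2.symm
          rw [add_assoc, add_assoc, add_right_inj] at this
          rw [sub_eq_sub_iff_add_eq_add]
          rw [this]; abel
        rw [this]
        exact h2.2 _ hp0.1.2.1 _ hp.1.2.1
      · rintro ⟨u, v⟩ hp ⟨u', v'⟩ hp' he
        simp only [coe_filter, mem_product, mem_filter, Set.mem_ofPred_eq] at hp hp'
        simp only [sub_left_inj] at he
        subst he
        have := hp.2.trans hp'.2.symm
        simp only [add_right_inj] at this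
        rw [this]
    · rw [not_nonempty_iff_eq_empty.1 hne]; simp

lemma kn_arith {a b h p q S T : ℕ} (hp : h ≤ p) (hpa : p + h ≤ a) (hq : h ≤ q) (hqb : q + h ≤ b)
    (hh : 0 < h) (e1 : p * (b - q) ≤ h * T) (e2 : q * (a - p) ≤ h * S) :
    a ≤ T + h ∨ b ≤ S + h := by
  by_contra hc
  push Not at hc
  obtain ⟨c1, c2⟩ := hc
  obtain ⟨p, rfl⟩ := Nat.exists_eq_add_of_le hp
  obtain ⟨q, rfl⟩ := Nat.exists_eq_add_of_le hq
  obtain ⟨a, rfl⟩ := Nat.exists_eq_add_of_le hpa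
  obtain ⟨b, rfl⟩ := Nat.exists_eq_add_of_le hqb
  have f1 : h + q + h + b - (h + q) = h + b := by omega
  have f2 : h + p + h + a - (h + p) = h + a := by omega
  rw [f1] at e1
  rw [f2] at e2
  have c1' : h * T < h * (h + p + a) := Nat.mul_lt_mul_of_pos_left (by omega) hh
  have c2' : h * S < h * (h + q + b) := Nat.mul_lt_mul_of_pos_left (by omega) hh
  nlinarith [Nat.zero_le (p * b), Nat.zero_le (q * a), Nat.zero_le (h * p), Nat.zero_le (h*q)]

lemma kn_half {C1 C2 H1 H2 : Finset G} (h1 : IsSubgp H1) (h2 : IsSubgp H2)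
    (s1 : StabBy C1 H1) (s2 : StabBy C2 H2) {z : G} (hz2 : z ∈ C2) (hz1 : z ∉ C1) :
    H1.card ≤ (C2 \ C1).card + (H1 ∩ H2).card ∨ H2.card ≤ (C1 \ C2).card + (H1 ∩ H2).card
      ∨ H2.card ≤ (C2 \ C1).card := by
  have k1 := kn_count h1 h2 s1 s2 z
  have k2 := kn_count h2 h1 s2 s1 z
  rw [inter_comm H2 H1] at k2
  set P := H1.filter (fun u => z + u ∈ C2) with hP
  set Q := H2.filter (fun v => z + v ∈ C1) with hQ
  have hI := h1.inter h2
  have hpos : 0 < (H1 ∩ H2).card := card_pos.2 ⟨0, hI.1⟩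
  have hp : (H1 ∩ H2).card ≤ P.card := by
    apply card_le_card
    intro u hu
    rw [mem_inter] at hu
    simp only [hP, mem_filter]
    exact ⟨hu.1, (s2.iff h2 hu.2).2 hz2⟩
  have hq : Q.card + (H1 ∩ H2).card ≤ H2.card := by
    rw [← card_union_of_disjoint]
    · apply card_le_card
      intro u hu
      simp only [hQ, mem_union, mem_filter, mem_inter] at hu
      tauto
    · rw [disjoint_left]
      intro u hu hu'
      rw [mem_inter] at hu'
      simp only [hQ, mem_filter] at hu
      exact hz1 ((s1.iff h1 hu'.1).1 hu.2)
  by_cases hQe : Q = ∅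
  · right; right
    rw [hQe] at k1
    simp only [card_empty, tsub_zero] at k1
    have : (H1 ∩ H2).card * H2.card ≤ (H1 ∩ H2).card * (C2 \ C1).card :=
      le_trans (Nat.mul_le_mul_right _ hp) k1
    exact Nat.le_of_mul_le_mul_left this hpos
  · obtain ⟨v0, hv0⟩ := nonempty_iff_ne_empty.2 hQe
    have hq' : (H1 ∩ H2).card ≤ Q.card := by
      apply Finset.card_le_card_of_injOn (fun x => v0 + x)
      · intro x hx
        simp only [coe_inter, Set.mem_inter_iff, mem_coe] at hx
        simp only [hQ, mem_filter] at hv0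
        simp only [hQ, coe_filter, Set.mem_ofPred_eq]
        refine ⟨h2.add hv0.1 hx.2, ?_⟩
        rw [← add_assoc]
        exact s1 _ hv0.2 _ hx.1
      · intro x _ y _ h; simpa using h
    by_cases hPe : P = H1
    · left
      have hle : (H1 ∩ H2).card ≤ H2.card - Q.card := by omega
      rw [hPe] at k1
      have : (H1 ∩ H2).card * H1.card ≤ (H1 ∩ H2).card * (C2 \ C1).card :=
        le_trans (by rw [mul_comm]; exact Nat.mul_le_mul_left _ hle) k1
      have := Nat.le_of_mul_le_mul_left this hpos
      omega
    · have hp' : P.card + (H1 ∩ H2).card ≤ H1.card := by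
        have hsub : P ⊆ H1 := filter_subset _ _
        obtain ⟨u0, hu0, hu0'⟩ : ∃ u ∈ H1, u ∉ P := by
          by_contra hc
          push Not at hc
          exact hPe (subset_antisymm hsub hc)
        have : ((H1 ∩ H2).image (fun x => u0 + x)).card = (H1 ∩ H2).card :=
          card_image_of_injective _ (add_right_injective u0)
        rw [← this, ← card_union_of_disjoint]
        · apply card_le_card
          intro u hu
          simp only [mem_union, mem_image, mem_inter] at hu
          rcases hu with hu | ⟨x, hx, rfl⟩
          · exact hsub hu
          · exact h1.add hu0 hx.1
        · rw [disjoint_left]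
          intro u hu hu'
          simp only [mem_image, mem_inter] at hu'
          obtain ⟨x, hx, rfl⟩ := hu'
          simp only [hP, mem_filter] at hu hu0'
          rw [← add_assoc, s2.iff h2 hx.2] at hu
          exact hu0' ⟨hu0, hu.2⟩
      rcases kn_arith hp hp' hq' hq hpos k1 k2 with h | h
      · left; exact h
      · right; left; exact h

lemma kn_union {C1 C2 H1 H2 : Finset G} (h1 : IsSubgp H1) (h2 : IsSubgp H2)
    (s1 : StabBy C1 H1) (s2 : StabBy C2 H2) {k : ℕ} (k1 : k ≤ C1.card + H1.card)
    (k2 : k ≤ C2.card + H2.card) :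
    ∃ H, IsSubgp H ∧ StabBy (C1 ∪ C2) H ∧ k ≤ (C1 ∪ C2).card + H.card := by
  by_cases c1 : C2 ⊆ C1
  · rw [union_eq_left.2 c1]; exact ⟨H1, h1, s1, k1⟩
  by_cases c2 : C1 ⊆ C2
  · rw [union_eq_right.2 c2]; exact ⟨H2, h2, s2, k2⟩
  obtain ⟨z, hz2, hz1⟩ := not_subset.1 c1
  obtain ⟨w, hw1, hw2⟩ := not_subset.1 c2
  refine ⟨H1 ∩ H2, h1.inter h2, ?_, ?_⟩
  · intro c hc h hh
    rw [mem_inter] at hh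
    rw [mem_union] at hc ⊢
    rcases hc with hc | hc
    · left; exact s1 c hc h hh.1
    · right; exact s2 c hc h hh.2
  · have e1 := kn_half h1 h2 s1 s2 hz2 hz1
    have e2 := kn_half h2 h1 s2 s1 hw1 hw2
    rw [inter_comm H2 H1] at e2
    have u1 : (C1 ∪ C2).card = C1.card + (C2 \ C1).card := by
      rw [← union_sdiff_self_eq_union, card_union_of_disjoint disjoint_sdiff]
    have u2 : (C1 ∪ C2).card = C2.card + (C1 \ C2).card := by
      rw [union_comm, ← union_sdiff_self_eq_union, card_union_of_disjoint disjoint_sdiff]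
    omega

lemma kn_point (A B : Finset G) {a b : G} (ha : a ∈ A) (hb : b ∈ B) :
    ∃ C H : Finset G, C ⊆ A + B ∧ a + b ∈ C ∧ IsSubgp H ∧ StabBy C H ∧
      A.card + B.card ≤ C.card + H.card := by
  induction hk : B.card using Nat.strong_induction_on generalizing A B with
  | _ k ih =>
  by_cases hall : ∀ e ∈ A, ∀ x ∈ B, x + (e - b) ∈ A
  · let H := (A.image (fun x => x - a)).filter (fun h => ∀ c ∈ A, c + h ∈ A)
    have memH : ∀ h, (∀ c ∈ A, c + h ∈ A) → h ∈ H := by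
      intro h hh
      simp only [H, mem_filter, mem_image]
      exact ⟨⟨a + h, hh a ha, by abel⟩, hh⟩
    have Hiff : ∀ h, h ∈ H ↔ ∀ c ∈ A, c + h ∈ A := by
      intro h
      refine ⟨fun h1 => (mem_filter.1 h1).2, memH h⟩
    have hneg : ∀ h ∈ H, ∀ c ∈ A, c - h ∈ A := by
      intro h hh c hc
      have hinj : A.image (fun c => c + h) = A := by
        apply eq_of_subset_of_card_le
        · intro y hy
          obtain ⟨c, hc, rfl⟩ := mem_image.1 hy
          exact (Hiff h).1 hh c hc
        · rw [card_image_of_injective _ (add_left_injective h)]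
      rw [← hinj] at hc
      obtain ⟨c', hc', rfl⟩ := mem_image.1 hc
      simpa using hc'
    refine ⟨A.image (fun x => x + b), H, ?_, ?_, ?_, ?_, ?_⟩
    · intro y hy
      obtain ⟨x, hx, rfl⟩ := mem_image.1 hy
      exact add_mem_add hx hb
    · exact mem_image_of_mem _ ha
    · refine ⟨memH 0 (by simp), ?_⟩
      intro x hx y hy
      apply memH
      intro c hc
      have := hneg y hy _ ((Hiff x).1 hx c hc)
      rwa [← add_sub_assoc]
    · intro c hc h hh
      obtain ⟨x, hx, rfl⟩ := mem_image.1 hc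
      rw [add_right_comm]
      exact mem_image_of_mem _ ((Hiff h).1 hh x hx)
    · rw [card_image_of_injective _ (add_left_injective b), ← hk]
      apply Nat.add_le_add_left
      apply Finset.card_le_card_of_injOn (fun x => x - b)
      · intro x hx
        rw [mem_coe] at hx ⊢
        apply memH
        intro c hc
        have := hall c hc x hx
        convert this using 1; abel
      · intro x _ y _ h; simpa using h
  · push Not at hall
    obtain ⟨e, he, x, hx, hxe⟩ := hall
    let B' := B.filter (fun y => y + (e - b) ∈ A)
    let D := (B.filter (fun y => ¬ y + (e - b) ∈ A)).image (fun y => y + (e - b))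
    let A' := A ∪ D
    have hB'lt : B'.card < k := by
      rw [← hk]
      apply card_lt_card
      refine ⟨filter_subset _ _, fun h => hxe (mem_filter.1 (h hx)).2⟩
    have hD : Disjoint A D := by
      rw [disjoint_right]
      intro y hy
      obtain ⟨w, hw, rfl⟩ := mem_image.1 hy
      exact (mem_filter.1 hw).2
    have hcard : A'.card + B'.card = A.card + B.card := by
      have e1 : D.card = (B.filter (fun y => ¬ y + (e - b) ∈ A)).card :=
        card_image_of_injective _ (add_left_injective _)
      have := Finset.card_filter_add_card_filter_not (s := B) (fun y => y + (e - b) ∈ A)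
      rw [card_union_of_disjoint hD, e1]
      simp only [B'] at *
      omega
    obtain ⟨C, H, hC, hc, hH, hs, hle⟩ := ih B'.card hB'lt A' B' (mem_union_left _ ha)
      (mem_filter.2 ⟨hb, by simpa using he⟩) rfl
    refine ⟨C, H, ?_, hc, hH, hs, by omega⟩
    refine hC.trans ?_
    intro y hy
    obtain ⟨p, hp, q, hq, rfl⟩ := mem_add.1 hy
    rw [mem_filter] at hq
    rcases mem_union.1 hp with hp | hp
    · exact add_mem_add hp hq.1
    · obtain ⟨w, hw, rfl⟩ := mem_image.1 hp
      rw [mem_filter] at hw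
      rw [mem_add]
      exact ⟨_, hq.2, w, hw.1, by abel⟩

theorem kneser_weak (A B : Finset G) (hA : A.Nonempty) (hB : B.Nonempty) :
    ∃ H : Finset G, IsSubgp H ∧ StabBy (A + B) H ∧ A.card + B.card ≤ (A + B).card + H.card := by
  have key : ∀ S : Finset G, S.Nonempty → S ⊆ A + B → ∃ C H : Finset G, S ⊆ C ∧ C ⊆ A + B ∧
      IsSubgp H ∧ StabBy C H ∧ A.card + B.card ≤ C.card + H.card := by
    intro S hS
    induction hS using Finset.Nonempty.cons_induction with
    | singleton c =>
      intro hc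
      obtain ⟨a, ha, b, hb, rfl⟩ := mem_add.1 (singleton_subset_iff.1 hc)
      obtain ⟨C, H, h1, h2, h3, h4, h5⟩ := kn_point A B ha hb
      exact ⟨C, H, singleton_subset_iff.2 h2, h1, h3, h4, h5⟩
    | cons c S hcS hS ih =>
      intro hc
      rw [cons_eq_insert, insert_subset_iff] at hc
      obtain ⟨C1, H1, a1, a2, a3, a4, a5⟩ := ih hc.2
      obtain ⟨a, ha, b, hb, rfl⟩ := mem_add.1 hc.1
      obtain ⟨C, H, h1, h2, h3, h4, h5⟩ := kn_point A B ha hb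
      obtain ⟨K, k1, k2, k3⟩ := kn_union h3 a3 h4 a4 h5 a5
      refine ⟨C ∪ C1, K, ?_, union_subset h1 a2, k1, k2, k3⟩
      rw [cons_eq_insert, insert_subset_iff]
      exact ⟨mem_union_left _ h2, a1.trans subset_union_right⟩
  obtain ⟨C, H, h1, h2, h3, h4, h5⟩ := key (A + B) (hA.add hB) subset_rfl
  obtain rfl := subset_antisymm h2 h1
  exact ⟨H, h3, h4, h5⟩

end Kneser

section Cross
open scoped Pointwise
variable {α : Type*} [DecidableEq α]

def Dn (F : Finset (Finset α)) : Prop := ∀ E ∈ F, ∀ E' ⊆ E, E' ∈ F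

theorem kneser_join (A B : Finset (Finset α)) (hA : Dn A) (hB : Dn B) (hA0 : ∅ ∈ A)
    (hB0 : ∅ ∈ B) :
    ∃ H : Finset (Finset α), ∅ ∈ H ∧ (∀ E ∈ image₂ (· ∪ ·) A B, ∀ h ∈ H, E ∆ h ∈ image₂ (· ∪ ·) A B)
      ∧ A.card + B.card ≤ (image₂ (· ∪ ·) A B).card + H.card := by
  letI : DecidableEq (AsBoolRing (Finset α)) := inferInstanceAs (DecidableEq (Finset α))
  let φ : Finset α ↪ AsBoolRing (Finset α) := (toBoolRing (α := Finset α)).toEmbedding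
  have hφ : ∀ x y, φ x + φ y = φ (x ∆ y) := fun x y => rfl
  have hsum : A.map φ + B.map φ = (image₂ (· ∪ ·) A B).map φ := by
    ext u
    simp only [mem_add, mem_map, mem_image₂]
    constructor
    · rintro ⟨_, ⟨a, ha, rfl⟩, _, ⟨b, hb, rfl⟩, rfl⟩
      refine ⟨a ∆ b, ⟨a \ b, hA a ha _ sdiff_subset, b \ a, hB b hb _ sdiff_subset, rfl⟩, ?_⟩
      rw [hφ]
    · rintro ⟨_, ⟨a, ha, b, hb, rfl⟩, rfl⟩
      refine ⟨φ a, ⟨a, ha, rfl⟩, φ (b \ a), ⟨_, hB b hb _ sdiff_subset, rfl⟩, ?_⟩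
      rw [hφ]
      congr 1
      ext x
      simp only [mem_symmDiff, mem_sdiff, mem_union]
      tauto
  obtain ⟨H, h1, h2, h3⟩ := kneser_weak (A.map φ) (B.map φ) ⟨φ ∅, mem_map_of_mem _ hA0⟩
    ⟨φ ∅, mem_map_of_mem _ hB0⟩
  rw [hsum] at h2 h3
  let ψ : AsBoolRing (Finset α) ↪ Finset α := (ofBoolRing (α := Finset α)).toEmbedding
  refine ⟨H.map ψ, ?_, ?_, ?_⟩
  · exact mem_map.2 ⟨0, h1.1, rfl⟩
  · intro E hE h hh
    obtain ⟨g, hg, rfl⟩ := mem_map.1 hh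
    have := h2 (φ E) (mem_map_of_mem _ hE) g hg
    obtain ⟨w, hw, hw'⟩ := mem_map.1 this
    have : w = E ∆ ψ g := hw'
    rwa [← this]
  · simpa using h3

theorem cross_sum {Y : Finset α} {A B C : Finset (Finset α)} (hA : Dn A) (hB : Dn B)
    (hAY : A ⊆ Y.powerset) (hBY : B ⊆ Y.powerset) (hCY : C ⊆ Y.powerset)
    (hA1 : ∀ y ∈ Y, {y} ∈ A) (hC1 : ∀ y ∈ Y, {y} ∈ C) (hA0 : ∅ ∈ A) (hB0 : ∅ ∈ B) (hC0 : ∅ ∈ C)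
    (hcr : ∀ a ∈ A, ∀ b ∈ B, ∀ c ∈ C, a ∪ b ∪ c ≠ Y) :
    8 * (A.card + B.card + C.card) ≤ 9 * 2 ^ Y.card := by
  obtain ⟨H, h0, hst, hle⟩ := kneser_join A B hA hB hA0 hB0
  set U := image₂ (· ∪ ·) A B with hU
  have hUY : U ⊆ Y.powerset := by
    intro u hu
    obtain ⟨a, ha, b, hb, rfl⟩ := mem_image₂.1 hu
    exact mem_powerset.2 (union_subset (mem_powerset.1 (hAY ha)) (mem_powerset.1 (hBY hb)))
  have hUD : Dn U := by
    intro u hu v hv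
    obtain ⟨a, ha, b, hb, rfl⟩ := mem_image₂.1 hu
    refine mem_image₂.2 ⟨a ∩ v, hA a ha _ inter_subset_left, b ∩ v, hB b hb _ inter_subset_left, ?_⟩
    rw [← union_inter_distrib_right]
    exact inter_eq_right.2 hv
  have hUC : ∀ u ∈ U, ∀ c ∈ C, u ∪ c ≠ Y := by
    intro u hu c hc
    obtain ⟨a, ha, b, hb, rfl⟩ := mem_image₂.1 hu
    exact hcr a ha b hb c hc
  have hUCc : U.card + C.card ≤ 2 ^ Y.card := by
    have e : (C.image (fun c => Y \ c)).card = C.card := by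
      apply card_image_of_injOn
      intro c hc d hd h
      have hc := mem_powerset.1 (hCY hc)
      have hd := mem_powerset.1 (hCY hd)
      simp only at h
      rw [← Finset.sdiff_sdiff_eq_self hc, h, Finset.sdiff_sdiff_eq_self hd]
    rw [← e, ← card_union_of_disjoint, ← card_powerset]
    · apply card_le_card
      apply union_subset hUY
      intro u hu
      obtain ⟨c, hc, rfl⟩ := mem_image.1 hu
      exact mem_powerset.2 sdiff_subset
    · rw [disjoint_right]
      intro u hu huU
      obtain ⟨c, hc, rfl⟩ := mem_image.1 hu
      exact hUC _ huU c hc (sdiff_union_of_subset (mem_powerset.1 (hCY hc)))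
  by_cases hbig : 8 * H.card ≤ 2 ^ Y.card
  · omega
  exfalso
  have hcl : ∀ E ∈ U, ∀ h ∈ H, E ∪ h ∈ U := by
    intro E hE h hh
    have := hst (E \ h) (hUD E hE _ sdiff_subset) h hh
    have e : (E \ h) ∆ h = E ∪ h := by
      ext x
      simp only [mem_symmDiff, mem_sdiff, mem_union]
      tauto
    rwa [e] at this
  have hcl2 : ∀ K ⊆ H, ∀ E ∈ U, E ∪ K.biUnion id ∈ U := by
    intro K
    induction K using Finset.induction_on with
    | empty => intro _ E hE; simpa using hE
    | insert h K _ ih =>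
      intro hK E hE
      rw [insert_subset_iff] at hK
      have := hcl _ (ih hK.2 E hE) h hK.1
      rw [biUnion_insert]
      convert this using 1
      simp only [id]
      ext x; simp only [mem_union]; tauto
  set Y1 := H.biUnion id with hY1
  have hU0 : ∅ ∈ U := mem_image₂.2 ⟨∅, hA0, ∅, hB0, by simp⟩
  have hAU : A ⊆ U := fun a ha => mem_image₂.2 ⟨a, ha, ∅, hB0, by simp⟩
  have hY1Y : Y1 ⊆ Y := by
    have := hcl2 H subset_rfl ∅ hU0
    exact subset_union_right.trans (mem_powerset.1 (hUY this))
  have hHc : H.card ≤ 2 ^ Y1.card := by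
    rw [← card_powerset]
    apply card_le_card
    intro h hh
    exact mem_powerset.2 (subset_biUnion_of_mem id hh)
  have hZ : (Y \ Y1).card ≤ 2 := by
    by_contra hc
    push Not at hc
    have := card_sdiff_add_card_eq_card hY1Y
    have h2 : 2 ^ (Y1.card + 3) ≤ 2 ^ Y.card := Nat.pow_le_pow_right (by norm_num) (by omega)
    rw [pow_add] at h2
    omega
  obtain ⟨a, ha, c, hc, hac⟩ : ∃ a ∈ A, ∃ c ∈ C, Y \ Y1 = a ∪ c := by
    by_cases h0 : (Y \ Y1) = ∅
    · exact ⟨∅, hA0, ∅, hC0, by simp [h0]⟩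
    by_cases h1 : (Y \ Y1).card = 1
    · obtain ⟨z, hz⟩ := card_eq_one.1 h1
      have hzY : z ∈ Y := (mem_sdiff.1 (hz ▸ mem_singleton_self z)).1
      exact ⟨{z}, hA1 z hzY, ∅, hC0, by simp [hz]⟩
    · have : (Y \ Y1).card = 2 := by
        have := card_pos.2 (nonempty_iff_ne_empty.2 h0)
        omega
      obtain ⟨z, w, hzw, hz⟩ := card_eq_two.1 this
      have hzY : z ∈ Y := (mem_sdiff.1 (hz ▸ (by simp : z ∈ ({z, w} : Finset α)))).1
      have hwY : w ∈ Y := (mem_sdiff.1 (hz ▸ (by simp : w ∈ ({z, w} : Finset α)))).1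
      exact ⟨{z}, hA1 z hzY, {w}, hC1 w hwY, by rw [hz]; rfl⟩
  have := hcl2 H subset_rfl a (hAU ha)
  apply hUC _ this c hc
  rw [union_right_comm, ← hac]
  exact sdiff_union_of_subset hY1Y

end Cross


section Basic
variable {α : Type*} [LinearOrder α]

def J (F : Finset (Finset α)) : ℕ → Finset α → Prop
  | 0, U => U = ∅
  | r + 1, U => ∃ E ∈ F, ∃ V, J F r V ∧ U = E ∪ V

def Un (r t : ℕ) (X : Finset α) (F : Finset (Finset α)) : Prop :=
  ∀ U, J F r U → t ≤ (X \ U).card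

structure Good (X : Finset α) (F : Finset (Finset α)) : Prop where
  sub : ∀ E ∈ F, E ⊆ X
  dn : Dn F
  sh : ∀ E ∈ F, ∀ j ∈ E, ∀ i ∈ X, i ∉ E → i < j → insert i (E.erase j) ∈ F

def Sng (X : Finset α) (F : Finset (Finset α)) : Prop := ∀ x ∈ X, {x} ∈ F

def mu (X : Finset α) (F : Finset (Finset α)) : ℚ := (F.card : ℚ) / 2 ^ X.card

def lk (x : α) (F : Finset (Finset α)) : Finset (Finset α) := F.memberSubfamily x
def dl (x : α) (F : Finset (Finset α)) : Finset (Finset α) := F.nonMemberSubfamily x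

lemma mem_lk {x : α} {F : Finset (Finset α)} {E : Finset α} :
    E ∈ lk x F ↔ insert x E ∈ F ∧ x ∉ E := mem_memberSubfamily
lemma mem_dl {x : α} {F : Finset (Finset α)} {E : Finset α} :
    E ∈ dl x F ↔ E ∈ F ∧ x ∉ E := mem_nonMemberSubfamily

lemma J_mono {F F' : Finset (Finset α)} (h : F ⊆ F') : ∀ {r : ℕ} {U : Finset α}, J F r U → J F' r U
  | 0, _, hU => hU
  | r + 1, _, ⟨E, hE, V, hV, hU⟩ => ⟨E, h hE, V, J_mono h hV, hU⟩

lemma J_sub {F : Finset (Finset α)} {X : Finset α} (h : ∀ E ∈ F, E ⊆ X) :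
    ∀ {r : ℕ} {U : Finset α}, J F r U → U ⊆ X
  | 0, U, hU => by simp only [J] at hU; simp [hU]
  | r + 1, _, ⟨E, hE, V, hV, hU⟩ => by
    rw [hU]; exact union_subset (h E hE) (J_sub h hV)

lemma J_sing {F : Finset (Finset α)} (B : Finset α) (h : ∀ b ∈ B, {b} ∈ F) : J F B.card B := by
  induction B using Finset.induction_on with
  | empty => simp [J]
  | insert b B hb ih =>
    rw [card_insert_of_notMem hb]
    exact ⟨{b}, h b (mem_insert_self _ _), B, ih (fun c hc => h c (mem_insert_of_mem hc)), rfl⟩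

lemma J_add {F : Finset (Finset α)} {E V : Finset α} {r : ℕ} (hE : E ∈ F) (hV : J F r V) :
    J F (r + 1) (E ∪ V) := ⟨E, hE, V, hV, rfl⟩

lemma Un.pred {r t : ℕ} {X : Finset α} {F : Finset (Finset α)} (h : Un (r + 1) t X F)
    (h0 : ∅ ∈ F) : Un r t X F := by
  intro U hU
  have := h _ (J_add h0 hU)
  simpa using this

lemma Un.le {r t t' : ℕ} {X : Finset α} {F : Finset (Finset α)} (h : Un r t X F)
    (h0 : t' ≤ t) : Un r t' X F := fun U hU => h0.trans (h U hU)

lemma Un.mono {r t : ℕ} {X : Finset α} {F F' : Finset (Finset α)} (h : Un r t X F)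
    (h0 : F' ⊆ F) : Un r t X F' := fun U hU => (h U (J_mono h0 hU))

lemma Un.succ {r t : ℕ} {X : Finset α} {F : Finset (Finset α)} (h : Un (r + 1) t X F)
    (h0 : ∅ ∈ F) (hs : Sng X F) (ht : 1 ≤ t) : Un r (t + 1) X F := by
  intro U hU
  have h1 := h.pred h0 U hU
  obtain ⟨y, hy⟩ := card_pos.1 (by omega : 0 < (X \ U).card)
  have h2 := h _ (J_add (hs y (mem_sdiff.1 hy).1) hU)
  have : X \ ({y} ∪ U) = (X \ U).erase y := by
    ext z; simp only [mem_sdiff, mem_union, mem_singleton, mem_erase]; tauto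
  rw [this, card_erase_of_mem hy] at h2
  omega

lemma Good.empty_mem {X : Finset α} {F : Finset (Finset α)} (h : Good X F) (hF : F.Nonempty) :
    ∅ ∈ F := by
  obtain ⟨E, hE⟩ := hF
  exact h.dn E hE _ (empty_subset _)

lemma lk_sub_dl {x : α} {F : Finset (Finset α)} (hF : Dn F) : lk x F ⊆ dl x F := by
  intro E hE
  rw [mem_lk] at hE
  exact mem_dl.2 ⟨hF _ hE.1 _ (subset_insert _ _), hE.2⟩

lemma Dn.lk {F : Finset (Finset α)} (h : Dn F) (x : α) : Dn (lk x F) := by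
  intro E hE E' hE'
  rw [mem_lk] at *
  exact ⟨h _ hE.1 _ (insert_subset_insert _ hE'), fun h => hE.2 (hE' h)⟩

lemma Dn.dl {F : Finset (Finset α)} (h : Dn F) (x : α) : Dn (dl x F) := by
  intro E hE E' hE'
  rw [mem_dl] at *
  exact ⟨h _ hE.1 _ hE', fun h => hE.2 (hE' h)⟩

lemma Good.lk {X : Finset α} {F : Finset (Finset α)} (h : Good X F) (x : α) :
    Good (X.erase x) (lk x F) := by
  refine ⟨?_, h.dn.lk x, ?_⟩
  · intro E hE y hy
    rw [mem_lk] at hE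
    refine mem_erase.2 ⟨?_, h.sub _ hE.1 (mem_insert_of_mem hy)⟩
    rintro rfl; exact hE.2 hy
  · intro E hE j hj i hi hiE hij
    rw [mem_lk] at hE ⊢
    rw [mem_erase] at hi
    have hjx : j ≠ x := by rintro rfl; exact hE.2 hj
    refine ⟨?_, ?_⟩
    · have := h.sh _ hE.1 j (mem_insert_of_mem hj) i hi.2 (by simp [hi.1, hiE]) hij
      rw [erase_insert_of_ne (Ne.symm hjx)] at this
      rwa [Finset.insert_comm]
    · simp only [mem_insert, mem_erase, not_or]
      exact ⟨Ne.symm hi.1, fun h => hE.2 h.2⟩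

lemma Good.dl {X : Finset α} {F : Finset (Finset α)} (h : Good X F) (x : α) :
    Good (X.erase x) (dl x F) := by
  refine ⟨?_, h.dn.dl x, ?_⟩
  · intro E hE y hy
    rw [mem_dl] at hE
    refine mem_erase.2 ⟨?_, h.sub _ hE.1 hy⟩
    rintro rfl; exact hE.2 hy
  · intro E hE j hj i hi hiE hij
    rw [mem_dl] at hE ⊢
    rw [mem_erase] at hi
    refine ⟨h.sh _ hE.1 j hj i hi.2 hiE hij, ?_⟩
    simp only [mem_insert, mem_erase, not_or]
    exact ⟨Ne.symm hi.1, fun h => hE.2 h.2⟩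

lemma Sng.dl {X : Finset α} {F : Finset (Finset α)} (h : Sng X F) (x : α) :
    Sng (X.erase x) (dl x F) := by
  intro y hy
  rw [mem_erase] at hy
  exact mem_dl.2 ⟨h y hy.2, by simpa using Ne.symm hy.1⟩

lemma lk_un {X : Finset α} {F : Finset (Finset α)} (h : Good X F) {x : α}
    (hm : ∀ y ∈ X, y ≤ x) {k q : ℕ} (hq : 1 ≤ q) (hU : Un (k + 1) q X F) :
    Un (k + 1) (q + k) (X.erase x) (lk x F) := by
  have key : ∀ (k : ℕ) (U W : Finset α), J (_root_.lk x F) (k + 1) U → W ⊆ X.erase x →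
      Disjoint W U → ∃ U', J F (k + 1) U' ∧ insert x U ⊆ U' ∧ (W ⊆ U' ∨ (W \ U').card + k ≤ W.card) := by
    intro k
    induction k with
    | zero =>
      rintro U W ⟨E, hE, V, hV, rfl⟩ hW hd
      rw [mem_lk] at hE
      refine ⟨_, J_add hE.1 hV, ?_, ?_⟩
      · rw [insert_union]
      · right
        simpa using card_le_card sdiff_subset
    | succ k ih =>
      rintro U W ⟨E, hE, V, hV, rfl⟩ hW hd
      rw [mem_lk] at hE
      obtain ⟨V', hV', hsub, hor⟩ := ih V W hV hW (hd.mono_right subset_union_right)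
      by_cases hc : W ⊆ V'
      · refine ⟨_, J_add hE.1 hV', ?_, Or.inl (hc.trans subset_union_right)⟩
        intro z hz
        simp only [mem_insert, mem_union] at hz ⊢
        rcases hz with hz | hz | hz
        · tauto
        · tauto
        · right; exact hsub (mem_insert_of_mem hz)
      · obtain ⟨y, hyW, hyV⟩ := not_subset.1 hc
        have hyX := mem_erase.1 (hW hyW)
        have hyE : y ∉ E := fun h => disjoint_left.1 hd hyW (mem_union_left _ h)
        have hyF : insert y E ∈ F := by
          have := h.sh _ hE.1 x (mem_insert_self _ _) y hyX.2 (by simp [hyX.1, hyE])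
            (lt_of_le_of_ne (hm y hyX.2) hyX.1)
          rwa [erase_insert hE.2] at this
        refine ⟨_, J_add hyF hV', ?_, Or.inr ?_⟩
        · intro z hz
          simp only [mem_insert, mem_union] at hz ⊢
          rcases hz with hz | hz | hz
          · right; exact hsub (by simp [hz])
          · tauto
          · right; exact hsub (mem_insert_of_mem hz)
        · have h1 : W \ (insert y E ∪ V') ⊆ (W \ V').erase y := by
            intro z hz
            simp only [mem_sdiff, mem_union, mem_insert, mem_erase] at *
            tauto
          have h2 := card_le_card h1
          have h3 : y ∈ W \ V' := mem_sdiff.2 ⟨hyW, hyV⟩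
          rw [card_erase_of_mem h3] at h2
          have h4 := card_pos.2 ⟨y, h3⟩
          rcases hor with hor | hor
          · exact absurd hor hc
          · omega
  intro U hJ
  obtain ⟨U', hU', hsub, hor⟩ := key k U (X.erase x \ U) hJ sdiff_subset sdiff_disjoint
  have h1 := hU U' hU'
  have h2 : X \ U' ⊆ (X.erase x \ U) \ U' := by
    intro z hz
    simp only [mem_sdiff, mem_erase] at *
    refine ⟨⟨⟨?_, hz.1⟩, fun h => hz.2 (hsub (mem_insert_of_mem h))⟩, hz.2⟩
    rintro rfl; exact hz.2 (hsub (mem_insert_self _ _))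
  have h3 := card_le_card h2
  rcases hor with hor | hor
  · rw [sdiff_eq_empty_iff_subset.2 hor] at h3
    rw [card_empty] at h3; omega
  · omega

lemma dl_un {X : Finset α} {F : Finset (Finset α)} {x : α} {r t : ℕ} (hU : Un r t X F) :
    Un r (t - 1) (X.erase x) (dl x F) := by
  intro U hJ
  have h1 := hU U (J_mono (fun E hE => (mem_dl.1 hE).1) hJ)
  have h2 : X \ U ⊆ insert x (X.erase x \ U) := by
    intro z hz
    simp only [mem_sdiff, mem_erase, mem_insert] at *
    tauto
  have h3 := (card_le_card h2).trans (card_insert_le _ _)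
  omega

lemma mu_split {X : Finset α} (F : Finset (Finset α)) {x : α} (hx : x ∈ X) :
    mu X F = (mu (X.erase x) (lk x F) + mu (X.erase x) (dl x F)) / 2 := by
  have h1 : (lk x F).card + (dl x F).card = F.card :=
    card_memberSubfamily_add_card_nonMemberSubfamily x F
  have h2 : X.card = (X.erase x).card + 1 := (card_erase_add_one hx).symm
  unfold mu
  rw [← h1, h2, pow_succ]
  push_cast
  field_simp

lemma mu_nonneg (X : Finset α) (F : Finset (Finset α)) : 0 ≤ mu X F := by
  unfold mu; positivity

lemma mu_mono (X : Finset α) {F F' : Finset (Finset α)} (h : F ⊆ F') : mu X F ≤ mu X F' := by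
  unfold mu
  have := card_le_card h
  gcongr

lemma mu_le_one {X : Finset α} {F : Finset (Finset α)} (h : ∀ E ∈ F, E ⊆ X) : mu X F ≤ 1 := by
  unfold mu
  rw [div_le_one (by positivity)]
  have : F.card ≤ X.powerset.card := card_le_card (fun E hE => mem_powerset.2 (h E hE))
  rw [card_powerset] at this
  exact_mod_cast this

lemma mu_erase {X : Finset α} {F : Finset (Finset α)} {y : α} (hy : y ∈ X) :
    mu X F = mu (X.erase y) F / 2 := by
  have h2 : X.card = (X.erase y).card + 1 := (card_erase_add_one hy).symm
  unfold mu
  rw [h2, pow_succ]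
  field_simp

lemma mu_half {X : Finset α} {F : Finset (Finset α)} (h : ∀ E ∈ F, E ⊆ X)
    (hp : ∀ E ∈ F, X \ E ∉ F) : mu X F ≤ 1 / 2 := by
  have e : (F.image (fun c => X \ c)).card = F.card := by
    apply card_image_of_injOn
    intro c hc d hd h1
    simp only at h1
    rw [← Finset.sdiff_sdiff_eq_self (h c hc), h1, Finset.sdiff_sdiff_eq_self (h d hd)]
  have : F.card + F.card ≤ 2 ^ X.card := by
    nth_rw 2 [← e]
    rw [← card_union_of_disjoint, ← card_powerset]
    · apply card_le_card
      apply union_subset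
      · intro E hE; exact mem_powerset.2 (h E hE)
      · intro u hu
        obtain ⟨c, hc, rfl⟩ := mem_image.1 hu
        exact mem_powerset.2 sdiff_subset
    · rw [disjoint_right]
      intro u hu huU
      obtain ⟨c, hc, rfl⟩ := mem_image.1 hu
      exact hp c hc huU
  unfold mu
  rw [div_le_div_iff₀ (by positivity) (by norm_num)]
  have : (F.card : ℚ) + F.card ≤ 2 ^ X.card := by exact_mod_cast this
  linarith

lemma mu_half_un {X : Finset α} {F : Finset (Finset α)} (h : ∀ E ∈ F, E ⊆ X)
    (hp : Un 2 1 X F) : mu X F ≤ 1 / 2 := by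
  apply mu_half h
  intro E hE hE'
  have := hp _ (J_add hE (J_add hE' (rfl : J F 0 ∅)))
  have e : X \ (E ∪ (X \ E ∪ ∅)) = ∅ := by
    ext z; simp; tauto
  rw [e] at this; simp at this

/-- restrict to a smaller ground set -/
lemma Good.restrict {X Y : Finset α} {F : Finset (Finset α)} (h : Good X F) (hY : Y ⊆ X)
    (hF : ∀ E ∈ F, E ⊆ Y) : Good Y F :=
  ⟨hF, h.dn, fun E hE j hj i hi => h.sh E hE j hj i (hY hi)⟩

lemma Un.restrict {X Y : Finset α} {F : Finset (Finset α)} {r t c : ℕ} (h : Un r t X F) (hY : Y ⊆ X)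
    (hc : X.card ≤ Y.card + c) : Un r (t - c) Y F := by
  intro U hU
  have h1 := h U hU
  have h2 : X \ U ⊆ (Y \ U) ∪ (X \ Y) := by
    intro z hz
    simp only [mem_sdiff, mem_union] at *
    tauto
  have h3 := (card_le_card h2).trans (card_union_le _ _)
  have h4 := card_sdiff_add_card_eq_card hY
  omega

end Basic


section Bounds
variable {α : Type*} [LinearOrder α]

lemma J_empty {F : Finset (Finset α)} (h : ∅ ∈ F) : ∀ r, J F r ∅
  | 0 => rfl
  | r + 1 => by simpa using J_add h (J_empty h r)

lemma Un.card_le {F : Finset (Finset α)} {X : Finset α} {r t : ℕ} (h : Un r t X F) (h0 : ∅ ∈ F) :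
    t ≤ X.card := by
  simpa using h ∅ (J_empty h0 r)

lemma exists_max_elt {X : Finset α} (h : 0 < X.card) : ∃ x ∈ X, ∀ y ∈ X, y ≤ x :=
  ⟨X.max' (card_pos.1 h), max'_mem _ _, fun y hy => le_max' _ y hy⟩

lemma mu_restrict {X Y : Finset α} {F : Finset (Finset α)} {c : ℕ} (h : X.card = Y.card + c) :
    mu X F = mu Y F / 2 ^ c := by
  unfold mu
  rw [h, pow_add]
  field_simp

lemma mu_empty (X : Finset α) : mu X ∅ = 0 := by simp [mu]

def PMain (α : Type*) [LinearOrder α] (k : ℕ) : Prop :=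
  ∀ (X : Finset α) (F : Finset (Finset α)), X.card ≤ k → ∀ r t : ℕ, 3 ≤ r → 1 ≤ t →
    r + t + 2 ≤ 2 ^ r → Good X F → Sng X F → Un r t X F →
    mu X F ≤ (r + t + 1 : ℚ) / 2 ^ (r + t)

lemma M_bound {k : ℕ} (hP : PMain α k) {r : ℕ} (hr : 3 ≤ r) : ∀ (T : ℕ) (X : Finset α)
    (F : Finset (Finset α)), X.card ≤ k → r + T + 2 ≤ 2 ^ r → Good X F → Un r T X F →
    mu X F ≤ 1 / 2 ^ T ∧
      (mu X F = 1 / 2 ^ T → ∃ Z ⊆ X, Z.card = T ∧ ∀ E ∈ F, Disjoint E Z) := by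
  intro T
  induction T with
  | zero =>
    intro X F _ _ hG _
    refine ⟨by simpa using mu_le_one hG.sub, fun _ => ⟨∅, by simp, by simp, by simp⟩⟩
  | succ T ih =>
    intro X F hX hT hG hU
    by_cases hS : Sng X F
    · have h1 := hP X F hX r (T + 1) hr (by omega) hT hG hS hU
      have h2 : ((r : ℚ) + (T + 1 : ℕ) + 1) / 2 ^ (r + (T + 1)) < 1 / 2 ^ (T + 1) := by
        rw [pow_add, ← div_div]
        apply div_lt_div_of_pos_right _ (by positivity)
        rw [div_lt_one (by positivity)]
        have : r + (T + 1) + 1 < 2 ^ r := by omega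
        exact_mod_cast this
      have h3 := lt_of_le_of_lt h1 h2
      exact ⟨h3.le, fun h => absurd h h3.ne⟩
    · unfold Sng at hS
      push Not at hS
      obtain ⟨y, hy, hyF⟩ := hS
      have hav : ∀ E ∈ F, y ∉ E := fun E hE h => hyF (hG.dn E hE _ (singleton_subset_iff.2 h))
      have hsub : ∀ E ∈ F, E ⊆ X.erase y := fun E hE =>
        subset_erase.2 ⟨hG.sub E hE, hav E hE⟩
      have hc := card_erase_add_one hy
      have hU' : Un r T (X.erase y) F := hU.restrict (c := 1) (erase_subset _ _) (by omega)
      obtain ⟨h1, h2⟩ := ih (X.erase y) F (by omega) (by omega) (hG.restrict (erase_subset _ _) hsub) hU'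
      rw [mu_erase hy, pow_succ, ← div_div]
      refine ⟨by linarith, ?_⟩
      intro he
      obtain ⟨Z, hZ, hZc, hZd⟩ := h2 (by linarith)
      refine ⟨insert y Z, insert_subset hy (hZ.trans (erase_subset _ _)), ?_, ?_⟩
      · rw [card_insert_of_notMem, hZc]
        intro h; exact (mem_erase.1 (hZ h)).1 rfl
      · intro E hE
        rw [disjoint_insert_right]
        exact ⟨hav E hE, hZd E hE⟩

lemma beta_bound {r T0 : ℕ} {β c : ℚ} (hβ : 0 ≤ β) (hb : 1 + β ^ (r + 1) ≤ 2 * β) (hc : 0 ≤ c) (k : ℕ)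
    (h0 : ∀ (X : Finset α) (F : Finset (Finset α)), X.card ≤ k → Good X F → Un (r + 1) T0 X F →
      mu X F ≤ c) : ∀ (n i : ℕ) (X : Finset α) (F : Finset (Finset α)), X.card ≤ n → n ≤ k → Good X F →
      Un (r + 1) (T0 + i) X F → mu X F ≤ c * β ^ i := by
  intro n
  induction n with
  | zero =>
    intro i X F hX _ hG hU
    rcases i with _ | i
    · simpa using h0 X F (by omega) hG hU
    by_cases hF : F.Nonempty
    · have := hU.card_le (hG.empty_mem hF)
      omega
    · rw [not_nonempty_iff_eq_empty.1 hF, mu_empty]; positivity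
  | succ n ih =>
    intro i X F hX hn hG hU
    rcases i with _ | i
    · simpa using h0 X F (by omega) hG hU
    by_cases hF : F.Nonempty
    · have := hU.card_le (hG.empty_mem hF)
      obtain ⟨x, hx, hm⟩ := exists_max_elt (by omega : 0 < X.card)
      have hcx := card_erase_add_one hx
      have h1 := ih (i + 1 + r) (X.erase x) (lk x F) (by omega) (by omega) (hG.lk x)
        (by rw [← add_assoc T0]; exact lk_un hG hm (by omega) hU)
      have h2 := ih i (X.erase x) (dl x F) (by omega) (by omega) (hG.dl x) (dl_un hU)
      rw [mu_split F hx]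
      have h3 : c * β ^ (i + 1 + r) + c * β ^ i = c * β ^ i * (1 + β ^ (r + 1)) := by ring
      have h4 : c * β ^ i * (1 + β ^ (r + 1)) ≤ c * β ^ i * (2 * β) :=
        mul_le_mul_of_nonneg_left hb (by positivity)
      rw [pow_succ]
      linarith
    · rw [not_nonempty_iff_eq_empty.1 hF, mu_empty]; positivity

/-- three-wise bounds -/
lemma M3 {k : ℕ} (hP : PMain α k) (i : ℕ) {X : Finset α} {F : Finset (Finset α)} (hX : X.card ≤ k)
    (hG : Good X F) (hU : Un 3 (3 + i) X F) : mu X F ≤ 1 / 8 * (5 / 8) ^ i := by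
  refine beta_bound (r := 2) (T0 := 3) (k := k) (by norm_num) (by norm_num) (by norm_num) ?_ k i X F hX
    le_rfl hG hU
  intro X F hX hG hU
  have := (M_bound hP (r := 3) le_rfl 3 X F hX (by norm_num) hG hU).1
  norm_num at this ⊢; exact this

lemma M65 {k : ℕ} (hP : PMain α k) {r T0 : ℕ} (hr : 3 ≤ r) (hT : r + 1 + T0 + 2 ≤ 2 ^ (r + 1)) (T : ℕ)
    {X : Finset α} {F : Finset (Finset α)} (hX : X.card ≤ k)
    (hG : Good X F) (hU : Un (r + 1) T X F) : 2 ^ T * mu X F ≤ (6 / 5) ^ (T - T0) := by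
  by_cases hle : T ≤ T0
  · have := (M_bound hP (r := r + 1) (by omega) T X F hX (by omega) hG hU).1
    rw [Nat.sub_eq_zero_of_le hle, pow_zero]
    rw [le_div_iff₀ (by positivity)] at this
    linarith
  · obtain ⟨i, rfl⟩ := Nat.exists_eq_add_of_le (not_le.1 hle).le
    have := beta_bound (r := r) (T0 := T0) (β := 3 / 5) (c := 1 / 2 ^ T0) (k := k) (by norm_num) ?_
      (by positivity) ?_ k i X F hX le_rfl hG hU
    · rw [Nat.add_sub_cancel_left]
      calc (2 : ℚ) ^ (T0 + i) * mu X F ≤ 2 ^ (T0 + i) * (1 / 2 ^ T0 * (3 / 5) ^ i) := by gcongr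
        _ = (2 * (3 / 5)) ^ i := by rw [mul_pow, pow_add]; field_simp
        _ = (6 / 5) ^ i := by norm_num
    · have : (3 / 5 : ℚ) ^ (r + 1) ≤ (3 / 5) ^ 4 :=
        pow_le_pow_of_le_one (by norm_num) (by norm_num) (by omega)
      norm_num at this ⊢; linarith
    · intro X F hX hG hU
      exact (M_bound hP (r := r + 1) (by omega) T0 X F hX hT hG hU).1

def Phi (e : ℕ) : ℚ := 5 * (6 / 5) ^ (e + 1) - 6 - e

lemma Phi_succ (e : ℕ) : Phi (e + 1) = Phi e + (6 / 5) ^ (e + 1) - 1 := by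
  unfold Phi
  rw [pow_succ _ (e + 1)]
  push_cast; ring

lemma Phi_mono : Monotone Phi := by
  apply monotone_nat_of_le_succ
  intro e
  rw [Phi_succ]
  have : (1 : ℚ) ≤ (6 / 5) ^ (e + 1) := one_le_pow₀ (by norm_num)
  linarith

lemma caseA_ind {k : ℕ} (hP : PMain α k) {r T0 T' : ℕ} (hr : 3 ≤ r)
    (hT : r + 1 + T0 + 2 ≤ 2 ^ (r + 1)) (hT' : r + T' + 2 ≤ 2 ^ r) (hT2 : 2 ≤ T') : ∀ (m t : ℕ)
    (X : Finset α) (F : Finset (Finset α)), X.card ≤ k + 1 → (m = 0 → X.card ≤ k) →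
    t + 2 = T' + m → Good X F → F.Nonempty → Un (r + 1) t X F → Un r (t + 2) X F →
    2 ^ (r + 1 + t) * mu X F ≤ m + Phi (r + t - T0) + 2 ^ (r - 1) := by
  intro m
  induction m with
  | zero =>
    intro t X F hX hX0 htm hG hF hU hU'
    have h1 := (M_bound hP (r := r) hr (t + 2) X F (hX0 rfl) (by omega) hG hU').1
    rw [le_div_iff₀ (by positivity)] at h1
    have h2 : (2 : ℚ) ^ (r + 1 + t) = 2 ^ (r - 1) * 2 ^ (t + 2) := by
      rw [← pow_add]; congr 1; omega
    have h3 : 0 ≤ Phi (r + t - T0) := by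
      have := Phi_mono (Nat.zero_le (r + t - T0))
      have h0 : Phi 0 = 0 := by norm_num [Phi]
      rwa [h0] at this
    rw [h2]
    have : (2 : ℚ) ^ (r - 1) * (mu X F * 2 ^ (t + 2)) ≤ 2 ^ (r - 1) * 1 := by gcongr
    push_cast
    linarith
  | succ m ih =>
    intro t X F hX hX0 htm hG hF hU hU'
    have hF0 := hG.empty_mem hF
    have hc := hU'.card_le hF0
    obtain ⟨x, hx, hm⟩ := exists_max_elt (by omega : 0 < X.card)
    have hcx := card_erase_add_one hx
    obtain ⟨t, rfl⟩ : ∃ t', t = t' + 1 := ⟨t - 1, by omega⟩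
    have h1 := M65 hP hr hT _ (by omega) (hG.lk x) (lk_un hG hm (by omega) hU)
    have h2 := ih t (X.erase x) (dl x F) (by omega) (by omega) (by omega) (hG.dl x)
      ⟨∅, mem_dl.2 ⟨hF0, by simp⟩⟩ (dl_un hU) (dl_un hU')
    rw [mu_split F hx]
    have e1 : (2 : ℚ) ^ (r + 1 + (t + 1)) = 2 * 2 ^ (t + 1 + r) := by rw [← pow_succ']; congr 1; omega
    have e2 : (2 : ℚ) ^ (r + 1 + t) = 2 ^ (t + 1 + r) := by congr 1; omega
    have e3 : (6 / 5 : ℚ) ^ (t + 1 + r - T0) + Phi (r + t - T0) = 1 + Phi (r + (t + 1) - T0) := by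
      by_cases hle : r + (t + 1) ≤ T0
      · have a1 : t + 1 + r - T0 = 0 := by omega
        have a2 : r + t - T0 = r + (t + 1) - T0 := by omega
        rw [a1, a2, pow_zero]
      · have a1 : t + 1 + r - T0 = (r + t - T0) + 1 := by omega
        have a2 : r + (t + 1) - T0 = (r + t - T0) + 1 := by omega
        rw [a1, a2, Phi_succ]; ring
    rw [e1]
    rw [e2] at h2
    push_cast
    linarith

lemma phi_final {r : ℕ} (hr : 3 ≤ r) : (5 : ℚ) * (6 / 5) ^ (r + 1) < r + 4 + 2 ^ (r - 1) := by
  obtain ⟨j, rfl⟩ := Nat.exists_eq_add_of_le hr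
  have e : 3 + j - 1 = j + 2 := by omega
  rw [e]
  have key : (5 : ℚ) * (6 / 5) ^ (3 + j + 1) < j + 7 + 2 ^ (j + 2) ∧ (j : ℚ) + 4 ≤ 2 ^ (j + 2) := by
    induction j with
    | zero => norm_num
    | succ j ih =>
      obtain ⟨h1, h2⟩ := ih (by omega) (by omega)
      constructor
      · rw [show 3 + (j + 1) + 1 = (3 + j + 1) + 1 by ring, pow_succ, show j + 1 + 2 = (j + 2) + 1 by ring,
          pow_succ (2 : ℚ)]
        push_cast; linarith
      · rw [show j + 1 + 2 = (j + 2) + 1 by ring, pow_succ (2 : ℚ)]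
        push_cast; linarith
  push_cast; linarith [key.1]

lemma two_pow_ge {r : ℕ} (hr : 3 ≤ r) : 2 * r + 2 ≤ 2 ^ r := by
  induction r, hr using Nat.le_induction with
  | base => norm_num
  | succ r hr ih => rw [pow_succ]; omega

lemma caseA_big {k : ℕ} (hP : PMain α k) {r t : ℕ} (hr : 3 ≤ r)
    {X : Finset α} {F : Finset (Finset α)} (hX : X.card ≤ k + 1) (ht : r + 1 + t + 2 ≤ 2 ^ (r + 1))
    (hbig : 2 ^ (r + 1) < r + 1 + (r + t) + 2) (hG : Good X F) (hF : F.Nonempty)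
    (hU : Un (r + 1) t X F) (hU' : Un r (t + 2) X F) :
    mu X F < (r + 1 + t + 1 : ℚ) / 2 ^ (r + 1 + t) := by
  have hp := two_pow_ge hr
  have hp1 : 2 ^ (r + 1) = 2 * 2 ^ r := by rw [pow_succ]; ring
  have hp2 : 2 ^ r = 2 * 2 ^ (r - 1) := by rw [← pow_succ']; congr 1; omega
  have h1 := caseA_ind hP (T0 := 2 ^ (r + 1) - (r + 1) - 2) (T' := 2 ^ r - r - 2) hr (by omega) (by omega)
    (by omega) (t + 2 - (2 ^ r - r - 2)) t X F hX (by omega) (by omega) hG hF hU hU'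
  have h2 := Phi_mono (show r + t - (2 ^ (r + 1) - (r + 1) - 2) ≤ r by omega)
  have h3 := phi_final hr
  have h4 : ((t + 2 - (2 ^ r - r - 2) : ℕ) : ℚ) = t + r + 4 - 2 ^ r := by
    have : t + 2 - (2 ^ r - r - 2) = t + r + 4 - 2 ^ r := by omega
    rw [this, Nat.cast_sub (by omega)]; push_cast; ring
  have h5 : (2 : ℚ) ^ r = 2 * 2 ^ (r - 1) := by exact_mod_cast hp2
  rw [lt_div_iff₀ (by positivity)]
  rw [h4, h5] at h1
  have h6 : Phi r = 5 * (6 / 5) ^ (r + 1) - 6 - r := rfl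
  linarith

end Bounds


section CaseThree
variable {α : Type*} [LinearOrder α]

lemma Un.three {X : Finset α} {F : Finset (Finset α)} (h : Un 3 1 X F) {A B C : Finset α}
    (hA : A ∈ F) (hB : B ∈ F) (hC : C ∈ F) : ¬ X ⊆ A ∪ B ∪ C := by
  intro hs
  have := h _ (J_add hA (J_add hB (J_add hC (rfl : J F 0 ∅))))
  rw [sdiff_eq_empty_iff_subset.2] at this
  · simp at this
  · intro z hz
    have := hs hz
    simp only [mem_union] at this ⊢
    tauto

lemma Un.two {X : Finset α} {F : Finset (Finset α)} (h : Un 2 1 X F) {A B : Finset α}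
    (hA : A ∈ F) (hB : B ∈ F) : ¬ X ⊆ A ∪ B := by
  intro hs
  have := h _ (J_add hA (J_add hB (rfl : J F 0 ∅)))
  rw [sdiff_eq_empty_iff_subset.2] at this
  · simp at this
  · intro z hz
    have := hs hz
    simp only [mem_union] at this ⊢
    tauto

lemma dl_lk_sub {X : Finset α} {F : Finset (Finset α)} (hG : Good X F) {x y : α} (hy : y ∈ X)
    (hyx : y < x) : dl y (lk x F) ⊆ lk y (dl x F) := by
  intro E hE
  simp only [mem_dl, mem_lk] at hE ⊢
  refine ⟨⟨?_, ?_⟩, hE.2⟩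
  · have := hG.sh _ hE.1.1 x (mem_insert_self _ _) y hy (by simp [hE.2, hyx.ne]) hyx
    rwa [erase_insert hE.1.2] at this
  · simp [hyx.ne', hE.1.2]

lemma mu_cross {Y : Finset α} {A B C : Finset (Finset α)}
    (h : 8 * (A.card + B.card + C.card) ≤ 9 * 2 ^ Y.card) : mu Y A + mu Y B + mu Y C ≤ 9 / 8 := by
  unfold mu
  rw [← add_div, ← add_div, div_le_div_iff₀ (by positivity) (by norm_num)]
  have : (8 : ℚ) * (A.card + B.card + C.card) ≤ 9 * 2 ^ Y.card := by exact_mod_cast h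
  linarith

lemma mu_cross2 {Y : Finset α} {A C : Finset (Finset α)} (hA : ∀ E ∈ A, E ⊆ Y)
    (hC : ∀ E ∈ C, E ⊆ Y) (hcr : ∀ a ∈ A, ∀ c ∈ C, a ∪ c ≠ Y) : mu Y A + mu Y C ≤ 1 := by
  have e : (C.image (fun c => Y \ c)).card = C.card := by
    apply card_image_of_injOn
    intro c hc d hd h1
    simp only at h1
    rw [← Finset.sdiff_sdiff_eq_self (hC c hc), h1, Finset.sdiff_sdiff_eq_self (hC d hd)]
  have : A.card + C.card ≤ 2 ^ Y.card := by
    rw [← e, ← card_union_of_disjoint, ← card_powerset]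
    · apply card_le_card
      apply union_subset
      · intro E hE; exact mem_powerset.2 (hA E hE)
      · intro u hu
        obtain ⟨c, hc, rfl⟩ := mem_image.1 hu
        exact mem_powerset.2 sdiff_subset
    · rw [disjoint_right]
      intro u hu huU
      obtain ⟨c, hc, rfl⟩ := mem_image.1 hu
      exact hcr _ huU c hc (sdiff_union_of_subset (hC c hc))
  unfold mu
  rw [← add_div, div_le_one (by positivity)]
  exact_mod_cast this

set_option maxHeartbeats 1000000 in
lemma RHG {k : ℕ} (hP : PMain α k) {X : Finset α} {R : Finset (Finset α)} (hX : X.card ≤ k)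
    (hG : Good X R) (hS : Sng X R) (h0 : ∅ ∈ R) (hU3 : Un 3 1 X R) (hU2 : Un 2 3 X R) {x : α}
    (hx : x ∈ X) (hm : ∀ y ∈ X, y ≤ x) :
    mu (X.erase x) (lk x R) ≤ 1 / 8 ∧
    (8 * mu (X.erase x) (dl x R) + 16 * mu (X.erase x) (lk x R) ≤ 9 / 2 + 4 * (10 / 64 + 625 / 32768) ∨
      (mu (X.erase x) (lk x R) ≤ 1 / 16 ∧ mu (X.erase x) (dl x R) ≤ 1 / 2)) := by
  have hc4 : 4 ≤ X.card := by
    have := (((hU3.succ h0 hS le_rfl).succ h0 hS (by norm_num)).succ h0 hS (by norm_num)).card_le h0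
    simpa using this
  have hcx := card_erase_add_one hx
  obtain ⟨a, ha, hma⟩ := exists_max_elt (by omega : 0 < (X.erase x).card)
  have hca := card_erase_add_one ha
  obtain ⟨b, hb, hmb⟩ := exists_max_elt (by omega : 0 < ((X.erase x).erase a).card)
  have hcb := card_erase_add_one hb
  have hGH := hG.lk x
  have hGG := hG.dl x
  have hH3 : Un 3 3 (X.erase x) (lk x R) := lk_un hG hm le_rfl hU3
  have hH2 : Un 2 4 (X.erase x) (lk x R) := lk_un hG hm (by norm_num) hU2
  have hG2 : Un 2 2 (X.erase x) (dl x R) := dl_un hU2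
  have hH8 : mu (X.erase x) (lk x R) ≤ 1 / 8 := by
    simpa using M3 hP 0 (by omega) hGH hH3
  have hGh : mu (X.erase x) (dl x R) ≤ 1 / 2 := mu_half_un hGG.sub (hG2.le (by norm_num))
  refine ⟨hH8, ?_⟩
  rw [mem_erase] at ha
  rw [mem_erase, mem_erase] at hb
  set Y := ((X.erase x).erase a).erase b with hY
  have hYX : ∀ y, y ∈ X ↔ (y ∈ Y ∨ y = x ∨ y = a ∨ y = b) := by
    intro y
    simp only [hY, mem_erase]
    constructor
    · tauto
    · rintro (h | rfl | rfl | rfl) <;> tauto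
  by_cases hSH : ∀ y ∈ Y, {y} ∈ lk x R
  · left
    -- the five traces
    have gHd := (hGH.dl a).dl b
    have gGa := (hGG.lk a).dl b
    have gGb := (hGG.dl a).lk b
    have gGab := (hGG.lk a).lk b
    have gGd := (hGG.dl a).dl b
    have sGd : Sng Y (dl b (dl a (dl x R))) := ((hS.dl x).dl a).dl b
    have hd0 : ∅ ∈ dl x R := mem_dl.2 ⟨h0, by simp⟩
    have nY : ∀ y ∈ Y, y ≠ a ∧ y ≠ b ∧ y ≠ x := by
      intro y hy; simp only [hY, mem_erase] at hy; tauto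
    have sHd : Sng Y (dl b (dl a (lk x R))) := by
      intro y hy
      have := nY y hy
      simp only [mem_dl, mem_singleton]
      exact ⟨⟨hSH y hy, this.1.symm⟩, this.2.1.symm⟩
    have H0 : ∅ ∈ lk x R := by rw [mem_lk]; exact ⟨by simpa using hS x hx, by simp⟩
    have Hd0 : ∅ ∈ dl b (dl a (lk x R)) := by simp [mem_dl, H0]
    have Gd0 : ∅ ∈ dl b (dl a (dl x R)) := by simp [mem_dl, h0]
    have hax : a < x := lt_of_le_of_ne (hm a ha.2) ha.1
    have hba : b < a := lt_of_le_of_ne (hma b (mem_erase.2 hb.2)) hb.1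
    have Ga0 : ∅ ∈ dl b (lk a (dl x R)) := by
      simp only [mem_dl, mem_lk]
      refine ⟨⟨⟨by simpa using hS a ha.2, ?_⟩, by simp⟩, by simp⟩
      simpa using hax.ne'
    have hsub1 : dl b (dl a (lk x R)) ⊆ lk b (dl a (dl x R)) := by
      intro E hE
      have h1 : E ∈ dl b (lk a (dl x R)) := by
        rw [mem_dl] at hE ⊢
        exact ⟨dl_lk_sub hG ha.2 hax hE.1, hE.2⟩
      exact dl_lk_sub hGG (mem_erase.2 hb.2) hba h1
    have pw : ∀ {F : Finset (Finset α)}, Good Y F → F ⊆ Y.powerset :=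
      fun h E hE => mem_powerset.2 (h.sub E hE)
    have c1 : mu Y (dl b (dl a (lk x R))) + mu Y (dl b (lk a (dl x R))) + mu Y (lk b (dl a (dl x R)))
        ≤ 9 / 8 := by
      apply mu_cross
      apply cross_sum gHd.dn gGa.dn (pw gHd) (pw gGa) (pw gGb) sHd
        (fun y hy => hsub1 (sHd y hy)) Hd0 Ga0 (hsub1 Hd0)
      intro e1 he1 e2 he2 e3 he3 heq
      simp only [mem_dl, mem_lk] at he1 he2 he3
      apply hU3.three he1.1.1.1 he2.1.1.1 he3.1.1.1
      intro z hz
      rw [hYX, ← heq] at hz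
      simp only [mem_union, mem_insert] at hz ⊢
      tauto
    have c2 : mu Y (dl b (dl a (lk x R))) + mu Y (lk b (lk a (dl x R))) + mu Y (dl b (dl a (dl x R)))
        ≤ 9 / 8 := by
      by_cases he : (lk b (lk a (dl x R))).Nonempty
      · apply mu_cross
        apply cross_sum gHd.dn gGab.dn (pw gHd) (pw gGab) (pw gGd) sHd sGd Hd0 (gGab.empty_mem he) Gd0
        intro e1 he1 e2 he2 e3 he3 heq
        simp only [mem_dl, mem_lk] at he1 he2 he3
        apply hU3.three he1.1.1.1 he2.1.1.1 he3.1.1.1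
        intro z hz
        rw [hYX, ← heq] at hz
        simp only [mem_union, mem_insert] at hz ⊢
        tauto
      · rw [not_nonempty_iff_eq_empty.1 he, mu_empty]
        have := mu_cross2 gHd.sub gGd.sub ?_
        · linarith
        · intro e1 he1 e3 he3 heq
          simp only [mem_dl, mem_lk] at he1 he3
          have := hU2 _ (J_add he1.1.1.1 (J_add he3.1.1.1 (rfl : J R 0 ∅)))
          have h2 : X \ (insert x e1 ∪ (e3 ∪ ∅)) ⊆ {a, b} := by
            intro z hz
            have heq' : e1 ∪ e3 = Y := heq
            rw [mem_sdiff, hYX, ← heq'] at hz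
            simp only [mem_union, mem_insert, mem_singleton] at hz ⊢
            tauto
          have h3 := (card_le_card h2).trans card_le_two
          omega
    have eG : mu (X.erase x) (dl x R) = ((mu Y (lk b (lk a (dl x R))) + mu Y (dl b (lk a (dl x R)))) / 2
        + (mu Y (lk b (dl a (dl x R))) + mu Y (dl b (dl a (dl x R)))) / 2) / 2 := by
      rw [mu_split (dl x R) (mem_erase.2 ha), mu_split (lk a (dl x R)) (by simpa using hb),
        mu_split (dl a (dl x R)) (x := b) (by simpa using hb)]
    have eH : mu (X.erase x) (lk x R) = ((mu Y (lk b (lk a (lk x R))) + mu Y (dl b (lk a (lk x R)))) / 2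
        + (mu Y (lk b (dl a (lk x R))) + mu Y (dl b (dl a (lk x R)))) / 2) / 2 := by
      rw [mu_split (lk x R) (mem_erase.2 ha), mu_split (lk a (lk x R)) (by simpa using hb),
        mu_split (dl a (lk x R)) (x := b) (by simpa using hb)]
    have u5 : Un 3 5 ((X.erase x).erase a) (lk a (lk x R)) := lk_un hGH hma (by norm_num) hH3
    have u2 : Un 3 2 ((X.erase x).erase a) (dl a (lk x R)) := dl_un hH3
    have u7 : Un 3 7 Y (lk b (lk a (lk x R))) := lk_un (hGH.lk a) hmb (by norm_num) u5
    have u4 : Un 3 4 Y (dl b (lk a (lk x R))) := dl_un u5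
    have u4' : Un 3 4 Y (lk b (dl a (lk x R))) := lk_un (hGH.dl a) hmb (by norm_num) u2
    have b7 := M3 hP 4 (show Y.card ≤ k by omega) ((hGH.lk a).lk b) u7
    have b4 := M3 hP 1 (show Y.card ≤ k by omega) ((hGH.lk a).dl b) u4
    have b4' := M3 hP 1 (show Y.card ≤ k by omega) ((hGH.dl a).lk b) u4'
    norm_num at b7 b4 b4' ⊢
    linarith
  · right
    refine ⟨?_, hGh⟩
    push Not at hSH
    obtain ⟨y, hy, hyn⟩ := hSH
    have hy' : y ≠ b ∧ y ≠ a ∧ y ∈ X.erase x := by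
      rw [hY, mem_erase, mem_erase] at hy; exact hy
    have hb' : b ∈ X.erase x := mem_erase.2 hb.2
    have nb : {b} ∉ lk x R := by
      intro h
      have := hGH.sh _ h b (by simp) y hy'.2.2 (by simpa using hy'.1)
        (lt_of_le_of_ne (hmb y (mem_erase.2 hy'.2)) hy'.1)
      simp at this; exact hyn this
    have na : {a} ∉ lk x R := by
      intro h
      have := hGH.sh _ h a (by simp) y hy'.2.2 (by simpa using hy'.2.1)
        (lt_of_le_of_ne (hma y hy'.2.2) hy'.2.1)
      simp at this; exact hyn this
    have hav : ∀ z, {z} ∉ lk x R → ∀ E ∈ lk x R, z ∉ E :=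
      fun z hz E hE h => hz (hGH.dn E hE _ (singleton_subset_iff.2 h))
    have hsub : ∀ E ∈ lk x R, E ⊆ Y.erase y := by
      intro E hE z hz
      rw [hY]
      simp only [mem_erase]
      refine ⟨?_, ?_, ?_, mem_erase.1 (hGH.sub E hE hz)⟩
      · rintro rfl; exact hav _ hyn E hE hz
      · rintro rfl; exact hav _ nb E hE hz
      · rintro rfl; exact hav _ na E hE hz
    have hcy := card_erase_add_one hy
    have hYs : Y.erase y ⊆ X.erase x :=
      (erase_subset _ _).trans ((erase_subset _ _).trans (erase_subset _ _))
    have hu : Un 2 1 (Y.erase y) (lk x R) := hH2.restrict (c := 3) hYs (by omega)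
    have h1 := mu_half_un hsub hu
    rw [mu_restrict (X := X.erase x) (Y := Y.erase y) (c := 3) (by omega)]
    clear_value Y
    generalize mu (Y.erase y) (lk x R) = m at h1
    norm_num
    linarith only [h1]

lemma caseA_three {k : ℕ} (hP : PMain α k) {t : ℕ}
    {X : Finset α} {F : Finset (Finset α)} (hX : X.card ≤ k + 1) (ht2 : 2 ≤ t) (ht3 : t ≤ 3)
    (hG : Good X F) (hS : Sng X F) (h0 : ∅ ∈ F)
    (hU : Un 3 t X F) (hU' : Un 2 (t + 2) X F) :
    mu X F < (3 + t + 1 : ℚ) / 2 ^ (3 + t) := by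
  have hc4 : t + 3 ≤ X.card := by
    have := ((hU'.succ h0 hS (by omega))).card_le h0
    omega
  obtain ⟨x, hx, hm⟩ := exists_max_elt (by omega : 0 < X.card)
  have hcx := card_erase_add_one hx
  obtain ⟨y, hy, hmy⟩ := exists_max_elt (by omega : 0 < (X.erase x).card)
  have hcy := card_erase_add_one hy
  have hyX := mem_erase.1 hy
  have hyx : y < x := lt_of_le_of_ne (hm y hyX.2) hyX.1
  have hd0 : ∅ ∈ dl x F := mem_dl.2 ⟨h0, by simp⟩
  obtain rfl | rfl : t = 2 ∨ t = 3 := by omega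
  · obtain ⟨r1, r2⟩ := RHG hP (by omega) (hG.dl x) (hS.dl x) hd0 (dl_un hU) (dl_un hU') hy hmy
    have u4 : Un 3 4 (X.erase x) (lk x F) := lk_un hG hm (by norm_num) hU
    have u6 : Un 3 6 ((X.erase x).erase y) (lk y (lk x F)) := lk_un (hG.lk x) hmy (by norm_num) u4
    have b6 := M3 hP 3 (by omega) ((hG.lk x).lk y) u6
    have s1 := mu_mono ((X.erase x).erase y) (dl_lk_sub hG hyX.2 hyx)
    rw [mu_split F hx, mu_split (lk x F) hy, mu_split (dl x F) hy]
    norm_num at *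
    rcases r2 with r2 | ⟨r2, r3⟩ <;> linarith
  · obtain ⟨z, hz, hmz⟩ := exists_max_elt (by omega : 0 < ((X.erase x).erase y).card)
    have hcz := card_erase_add_one hz
    have hzX := mem_erase.1 hz
    have hzy : z < y := lt_of_le_of_ne (hmy z hzX.2) hzX.1
    have hd00 : ∅ ∈ dl y (dl x F) := mem_dl.2 ⟨hd0, by simp⟩
    have v2 : Un 3 2 (X.erase x) (dl x F) := dl_un hU
    have v4 : Un 2 4 (X.erase x) (dl x F) := dl_un hU'
    obtain ⟨r1, r2⟩ := RHG hP (by omega) ((hG.dl x).dl y) ((hS.dl x).dl y) hd00 (dl_un v2) (dl_un v4) hz hmz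
    have u5 : Un 3 5 (X.erase x) (lk x F) := lk_un hG hm (by norm_num) hU
    have u7 : Un 3 7 ((X.erase x).erase y) (lk y (lk x F)) := lk_un (hG.lk x) hmy (by norm_num) u5
    have u4 : Un 3 4 ((X.erase x).erase y) (dl y (lk x F)) := dl_un u5
    have u6 : Un 3 6 (((X.erase x).erase y).erase z) (lk z (dl y (lk x F))) :=
      lk_un ((hG.lk x).dl y) hmz (by norm_num) u4
    have w4 : Un 3 4 ((X.erase x).erase y) (lk y (dl x F)) := lk_un (hG.dl x) hmy (by norm_num) v2
    have w6 : Un 3 6 (((X.erase x).erase y).erase z) (lk z (lk y (dl x F))) :=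
      lk_un ((hG.dl x).lk y) hmz (by norm_num) w4
    have b7 := M3 hP 4 (by omega) ((hG.lk x).lk y) u7
    have b6 := M3 hP 3 (by omega) (((hG.lk x).dl y).lk z) u6
    have b6' := M3 hP 3 (by omega) (((hG.dl x).lk y).lk z) w6
    have s0 : dl z (lk y (dl x F)) ⊆ lk z (dl y (dl x F)) := dl_lk_sub (hG.dl x) hzX.2 hzy
    have s1 := mu_mono (((X.erase x).erase y).erase z) s0
    have s2 : dl z (dl y (lk x F)) ⊆ lk z (dl y (dl x F)) := by
      refine subset_trans ?_ s0
      intro E hE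
      rw [mem_dl] at hE ⊢
      exact ⟨dl_lk_sub hG hyX.2 hyx hE.1, hE.2⟩
    have s3 := mu_mono (((X.erase x).erase y).erase z) s2
    rw [mu_split F hx, mu_split (lk x F) hy, mu_split (dl x F) hy, mu_split (dl y (lk x F)) hz,
      mu_split (lk y (dl x F)) hz, mu_split (dl y (dl x F)) hz]
    norm_num at *
    rcases r2 with r2 | ⟨r2, r3⟩ <;> linarith

end CaseThree


section P5
variable {α : Type*} [LinearOrder α]

lemma lk_bound {k : ℕ} (hP : PMain α k) {r t : ℕ} (hr : 2 ≤ r) (ht1 : 1 ≤ t)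
    {X : Finset α} {F : Finset (Finset α)} (hX : X.card ≤ k + 1) (ht : r + 1 + t + 2 ≤ 2 ^ (r + 1))
    (hG : Good X F) (hS : Sng X F) (h0 : ∅ ∈ F) (hU : Un (r + 1) t X F)
    {x : α} (hx : x ∈ X) (hm : ∀ y ∈ X, y ≤ x) :
    mu X F < ((r + 1 + t + 1 : ℕ) : ℚ) / 2 ^ (r + 1 + t) ∨
    (mu (X.erase x) (lk x F) ≤ 1 / 2 ^ (r + t) ∧
      (mu (X.erase x) (lk x F) = 1 / 2 ^ (r + t) →
        ∃ Z ⊆ X.erase x, Z.card = r + t ∧ ∀ E ∈ lk x F, Disjoint E Z)) := by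
  have hL := lk_un hG hm ht1 hU
  have hcx := card_erase_add_one hx
  by_cases hbig : r + 1 + (r + t) + 2 ≤ 2 ^ (r + 1)
  · right
    exact M_bound hP (by omega) (r + t) _ _ (by omega) hbig (hG.lk x)
      (by rw [add_comm r t]; exact hL)
  by_cases hA : Un r (t + 2) X F
  · left
    rcases Nat.lt_or_ge r 3 with h3 | h3
    · obtain rfl : r = 2 := by omega
      norm_num at ht hbig
      have := caseA_three hP hX (by omega) (by omega) hG hS h0 hU hA
      push_cast
      convert this using 3
    · have := caseA_big hP h3 hX ht (by omega) hG ⟨_, h0⟩ hU hA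
      push_cast
      exact this
  right
  unfold Un at hA
  push Not at hA
  obtain ⟨U, hJ, hc⟩ := hA
  have hc1 := hU.succ h0 hS ht1 U hJ
  have hC : (X \ U).card = t + 1 := by omega
  have hCe : t ≤ ((X \ U).erase x).card := by
    have := pred_card_le_card_erase (s := X \ U) (a := x); omega
  obtain ⟨C', hC'1, hC'2⟩ := exists_subset_card_eq hCe
  have hdis : ∀ E ∈ lk x F, ∀ p ∈ E, p ∉ C' := by
    intro E hE p hp hpC
    have hE' := mem_lk.1 hE
    have hpx : p ≠ x := by rintro rfl; exact hE'.2 hp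
    have hpC2 := (mem_erase.1 (hC'1 hpC)).2
    have hpx2 : {p, x} ∈ F := by
      apply hG.dn _ hE'.1
      intro z hz
      simp only [mem_insert, mem_singleton] at hz ⊢
      rcases hz with rfl | rfl <;> simp [hp]
    have h2 : ∃ c ∈ (X \ U).erase p, {p, c} ∈ F := by
      by_cases hxC : x ∈ X \ U
      · exact ⟨x, mem_erase.2 ⟨hpx.symm, hxC⟩, hpx2⟩
      · have : 0 < ((X \ U).erase p).card := by rw [card_erase_of_mem hpC2]; omega
        obtain ⟨c, hc⟩ := card_pos.1 this
        refine ⟨c, hc, ?_⟩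
        have hc' := mem_erase.1 hc
        have hcx : c ≠ x := by rintro rfl; exact hxC hc'.2
        have hcX := (mem_sdiff.1 hc'.2).1
        have := hG.sh _ hpx2 x (by simp) c hcX (by simp [hc'.1, hcx]) (lt_of_le_of_ne (hm c hcX) hcx)
        convert this using 1
        ext z
        simp only [mem_insert, mem_singleton, mem_erase]
        constructor
        · rintro (rfl | rfl)
          · right; exact ⟨hpx, Or.inl rfl⟩
          · left; rfl
        · rintro (rfl | ⟨h, rfl | rfl⟩)
          · right; rfl
          · left; rfl
          · exact absurd rfl h
    obtain ⟨c, hc, hpc⟩ := h2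
    have h3 := hU _ (J_add hpc hJ)
    have h4 : X \ ({p, c} ∪ U) = ((X \ U).erase p).erase c := by
      ext z
      simp only [mem_sdiff, mem_union, mem_insert, mem_singleton, mem_erase]
      tauto
    rw [h4, card_erase_of_mem hc, card_erase_of_mem hpC2] at h3
    omega
  have hC'X : C' ⊆ X.erase x := fun z hz => by
    have := hC'1 hz
    simp only [mem_erase, mem_sdiff] at this ⊢
    exact ⟨this.1, this.2.1⟩
  have hYs : X.erase x \ C' ⊆ X.erase x := sdiff_subset
  have hYc : (X.erase x).card = (X.erase x \ C').card + t := by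
    have := card_sdiff_add_card_eq_card hC'X; omega
  have hsub : ∀ E ∈ lk x F, E ⊆ X.erase x \ C' := fun E hE z hz =>
    mem_sdiff.2 ⟨(hG.lk x).sub E hE hz, hdis E hE z hz⟩
  have hu : Un (r + 1) (t + r - t) (X.erase x \ C') (lk x F) := hL.restrict hYs (by omega)
  rw [Nat.add_sub_cancel_left] at hu
  have h2r := two_pow_ge (r := r + 1) (by omega)
  have hM := M_bound hP (by omega) r _ _ (by omega) (by omega) ((hG.lk x).restrict hYs hsub) hu
  rw [mu_restrict hYc]
  have e : (1 : ℚ) / 2 ^ (r + t) = 1 / 2 ^ r / 2 ^ t := by rw [pow_add]; field_simp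
  rw [e]
  refine ⟨by have := hM.1; gcongr, fun h => ?_⟩
  have h' : mu (X.erase x \ C') (lk x F) = 1 / 2 ^ r := by
    field_simp at h ⊢; linarith
  obtain ⟨Z, hZ, hZc, hZd⟩ := hM.2 h'
  refine ⟨Z ∪ C', union_subset (hZ.trans hYs) hC'X, ?_, fun E hE => ?_⟩
  · rw [card_union_of_disjoint, hZc, hC'2]
    exact disjoint_left.2 fun z hz => (mem_sdiff.1 (hZ hz)).2
  · rw [disjoint_union_right]
    exact ⟨hZd E hE, disjoint_left.2 (hdis E hE)⟩

lemma dl_bound {k : ℕ} (hP : PMain α k) {r t : ℕ} (hr : 2 ≤ r) (ht1 : 1 ≤ t)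
    {X : Finset α} {F : Finset (Finset α)} (hX : X.card ≤ k + 1) (ht : r + 1 + t + 2 ≤ 2 ^ (r + 1))
    (hG : Good X F) (hS : Sng X F) (h0 : ∅ ∈ F) (hU : Un (r + 1) t X F)
    {x : α} (hx : x ∈ X) :
    mu (X.erase x) (dl x F) ≤ ((r + 1 + t : ℕ) : ℚ) / 2 ^ (r + t) := by
  have hcx := card_erase_add_one hx
  have hu2 := hU.succ h0 hS ht1
  by_cases ht2 : 2 ≤ t
  · have := hP _ _ (by omega) (r + 1) (t - 1) (by omega) (by omega) (by omega) (hG.dl x) (hS.dl x) (dl_un hU)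
    obtain ⟨s, rfl⟩ : ∃ s, t = s + 1 := ⟨t - 1, by omega⟩
    simp only [Nat.add_sub_cancel] at this
    rw [show r + (s + 1) = r + 1 + s by ring]
    push_cast at this ⊢
    convert this using 2
    ring
  obtain rfl : t = 1 := by omega
  by_cases hr3 : 3 ≤ r
  · have h2r := two_pow_ge hr3
    have := hP _ _ (by omega) r 1 (by omega) (by omega) (by omega) (hG.dl x) (hS.dl x) (dl_un hu2)
    push_cast at this ⊢
    exact this
  obtain rfl : r = 2 := by omega
  have := mu_half_un (hG.dl x).sub (dl_un hu2)
  norm_num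
  exact this

lemma step_bound {k : ℕ} (hP : PMain α k) {r t : ℕ} (hr : 2 ≤ r) (ht1 : 1 ≤ t)
    {X : Finset α} {F : Finset (Finset α)} (hX : X.card ≤ k + 1) (ht : r + 1 + t + 2 ≤ 2 ^ (r + 1))
    (hG : Good X F) (hS : Sng X F) (h0 : ∅ ∈ F) (hU : Un (r + 1) t X F) :
    mu X F ≤ ((r + 1 + t + 1 : ℕ) : ℚ) / 2 ^ (r + 1 + t) ∧
    (mu X F = ((r + 1 + t + 1 : ℕ) : ℚ) / 2 ^ (r + 1 + t) → ∃ x ∈ X, ∃ Z ⊆ X.erase x, Z.card = r + t ∧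
      (∀ E ∈ lk x F, Disjoint E Z) ∧ mu (X.erase x) (lk x F) = 1 / 2 ^ (r + t)) := by
  have hc := hU.card_le h0
  obtain ⟨x, hx, hm⟩ := exists_max_elt (by omega : 0 < X.card)
  have hd := dl_bound hP hr ht1 hX ht hG hS h0 hU hx
  rcases lk_bound hP hr ht1 hX ht hG hS h0 hU hx hm with h | ⟨h1, h2⟩
  · exact ⟨h.le, fun h' => absurd h' h.ne⟩
  rw [mu_split F hx]
  have e : ((r + 1 + t + 1 : ℕ) : ℚ) / 2 ^ (r + 1 + t) = (1 / 2 ^ (r + t) + ((r + 1 + t : ℕ) : ℚ) / 2 ^ (r + t)) / 2 := by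
    rw [show r + 1 + t = r + t + 1 by ring, pow_succ]
    push_cast
    field_simp
    ring
  rw [e]
  refine ⟨by linarith, fun h => ?_⟩
  have h3 : mu (X.erase x) (lk x F) = 1 / 2 ^ (r + t) := by linarith
  obtain ⟨Z, hZ, hZc, hZd⟩ := h2 h3
  exact ⟨x, hx, Z, hZ, hZc, hZd, h3⟩

lemma PMain_all (k : ℕ) : PMain α k := by
  induction k with
  | zero =>
    intro X F hX r t hr ht1 _ hG hS hU
    rcases F.eq_empty_or_nonempty with rfl | hF
    · rw [mu_empty]; positivity
    · have := hU.card_le (hG.empty_mem hF); omega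
  | succ k ih =>
    intro X F hX r t hr ht1 ht hG hS hU
    rcases F.eq_empty_or_nonempty with rfl | hF
    · rw [mu_empty]; positivity
    obtain ⟨r, rfl⟩ : ∃ s, r = s + 1 := ⟨r - 1, by omega⟩
    have := (step_bound ih (by omega) ht1 hX ht hG hS (hG.empty_mem hF) hU).1
    push_cast at this ⊢
    exact this

/-- the extremal family -/
def Fam0 (X A : Finset α) : Finset (Finset α) := X.powerset.filter (fun E => (E ∩ A).card ≤ 1)

lemma card_filter_inter_le {X A : Finset α} (hA : A ⊆ X) :
    (Fam0 X A).card = (A.card + 1) * 2 ^ (X.card - A.card) := by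
  have h1 : Fam0 X A = ((A.powerset.filter (fun E => E.card ≤ 1)) ×ˢ (X \ A).powerset).image
      (fun p => p.1 ∪ p.2) := by
    ext E
    simp only [Fam0, mem_filter, mem_powerset, mem_image, mem_product, Prod.exists]
    constructor
    · rintro ⟨h1, h2⟩
      refine ⟨E ∩ A, E \ A, ⟨⟨inter_subset_right, h2⟩, sdiff_subset_sdiff h1 subset_rfl⟩, ?_⟩
      ext z; simp; tauto
    · rintro ⟨a, b, ⟨⟨h1, h2⟩, h3⟩, rfl⟩
      refine ⟨union_subset (h1.trans hA) (h3.trans sdiff_subset), ?_⟩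
      have : (a ∪ b) ∩ A ⊆ a := by
        intro z hz
        simp only [mem_inter, mem_union] at hz
        rcases hz.1 with h | h
        · exact h
        · exact absurd hz.2 (mem_sdiff.1 (h3 h)).2
      exact (card_le_card this).trans h2
  rw [h1, card_image_of_injOn, card_product, card_powerset, card_sdiff_of_subset hA]
  · congr 1
    have : A.powerset.filter (fun E => E.card ≤ 1) = insert ∅ (A.image (fun a => {a})) := by
      ext E
      simp only [mem_filter, mem_powerset, mem_insert, mem_image]
      constructor
      · rintro ⟨h1, h2⟩
        rcases Nat.lt_or_ge E.card 1 with h | h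
        · left; rw [← card_eq_zero]; omega
        · right
          obtain ⟨a, rfl⟩ := card_eq_one.1 (by omega : E.card = 1)
          exact ⟨a, by simpa using h1, rfl⟩
      · rintro (rfl | ⟨a, ha, rfl⟩) <;> simp [*]
    rw [this, card_insert_of_notMem (by simp), card_image_of_injective _ (singleton_injective)]
  · rintro ⟨a, b⟩ h ⟨a', b'⟩ h' heq
    simp only [coe_product, Set.mem_prod, mem_coe, mem_filter, mem_powerset] at h h' heq
    obtain ⟨⟨h1, _⟩, h2⟩ := h
    obtain ⟨⟨h3, _⟩, h4⟩ := h'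
    have k1 : ∀ z, z ∈ a ∪ b ↔ z ∈ a' ∪ b' := fun z => by rw [heq]
    have : a = a' ∧ b = b' := by
      constructor <;> ext z <;> have := k1 z <;> have l1 := @h1 z <;> have l2 := @h2 z <;>
        have l3 := @h3 z <;> have l4 := @h4 z <;> simp only [mem_union, mem_sdiff] at * <;> tauto
    rw [this.1, this.2]

lemma mu_Fam0 {X A : Finset α} (hA : A ⊆ X) : mu X (Fam0 X A) = ((A.card + 1 : ℕ) : ℚ) / 2 ^ A.card := by
  unfold mu
  rw [card_filter_inter_le hA]
  have h := card_le_card hA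
  obtain ⟨d, hd⟩ : ∃ d, X.card = A.card + d := ⟨X.card - A.card, by omega⟩
  rw [hd, Nat.add_sub_cancel_left, pow_add]
  push_cast
  field_simp

lemma eq_of_mu_eq {X : Finset α} {F F' : Finset (Finset α)} (h : F ⊆ F') (hm : mu X F' = mu X F) : F = F' := by
  apply eq_of_subset_of_card_le h
  unfold mu at hm
  rw [div_left_inj' (by positivity)] at hm
  have : F'.card = F.card := by exact_mod_cast hm
  omega

theorem shifted_main {r t : ℕ} (hr : 3 ≤ r) (ht1 : 1 ≤ t)
    {X : Finset α} {F : Finset (Finset α)} (ht : r + t + 2 ≤ 2 ^ r)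
    (hG : Good X F) (hS : Sng X F) (hU : Un r t X F) :
    mu X F ≤ ((r + t + 1 : ℕ) : ℚ) / 2 ^ (r + t) ∧
    (mu X F = ((r + t + 1 : ℕ) : ℚ) / 2 ^ (r + t) → ∃ A ⊆ X, A.card = r + t ∧ F = Fam0 X A) := by
  rcases F.eq_empty_or_nonempty with rfl | hF
  · rw [mu_empty]
    refine ⟨by positivity, fun h => absurd h ?_⟩
    have : (0:ℚ) < ((r + t + 1 : ℕ) : ℚ) / 2 ^ (r + t) := by positivity
    exact this.ne
  have h0 := hG.empty_mem hF
  obtain ⟨r, rfl⟩ : ∃ s, r = s + 1 := ⟨r - 1, by omega⟩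
  obtain ⟨h1, h2⟩ := step_bound (PMain_all X.card) (by omega) ht1 (by omega) ht hG hS h0 hU
  refine ⟨h1, fun heq => ?_⟩
  obtain ⟨x, hx, Z, hZ, hZc, hZd, hL⟩ := h2 heq
  have hxZ : x ∉ Z := fun h => by simpa using hZ h
  have hZX : Z ⊆ X := hZ.trans (erase_subset _ _)
  -- link is full
  have hlk : lk x F = (X.erase x \ Z).powerset := by
    apply eq_of_subset_of_card_le
    · intro E hE
      exact mem_powerset.2 (subset_sdiff.2 ⟨(hG.lk x).sub E hE, hZd E hE⟩)
    · rw [card_powerset, card_sdiff_of_subset hZ, hZc]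
      unfold mu at hL
      have := card_le_card hZ
      have e : (X.erase x).card = (r + t) + ((X.erase x).card - (r + t)) := by omega
      rw [e, pow_add] at hL
      field_simp at hL
      have h3 : (lk x F).card = 2 ^ ((X.erase x).card - (r + t)) := by exact_mod_cast hL
      omega
  have hbig : insert x (X.erase x \ Z) ∈ F := by
    have : X.erase x \ Z ∈ lk x F := by rw [hlk]; simp
    exact (mem_lk.1 this).1
  have hA : insert x Z ⊆ X := insert_subset hx hZX
  have hAc : (insert x Z).card = r + 1 + t := by rw [card_insert_of_notMem hxZ, hZc]; ring
  refine ⟨insert x Z, hA, hAc, ?_⟩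
  apply eq_of_mu_eq (X := X)
  · intro E hE
    simp only [Fam0, mem_filter, mem_powerset]
    refine ⟨hG.sub E hE, ?_⟩
    by_cases hxE : x ∈ E
    · have : E.erase x ∈ lk x F := mem_lk.2 ⟨by rwa [insert_erase hxE], by simp⟩
      have hd := disjoint_left.1 (hZd _ this)
      have : E ∩ insert x Z ⊆ {x} := by
        intro z hz
        simp only [mem_inter, mem_insert, mem_singleton, mem_erase] at hz hd ⊢
        by_contra hne
        exact hd ⟨hne, hz.1⟩ (by tauto)
      exact (card_le_card this).trans (by simp)
    · by_contra hcon
      push Not at hcon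
      obtain ⟨B, hB1, hB2⟩ := exists_subset_card_eq (n := 2) (by omega : 2 ≤ (E ∩ insert x Z).card)
      have hBF : B ∈ F := hG.dn E hE B (hB1.trans inter_subset_left)
      have hBZ : B ⊆ Z := by
        intro z hz
        have := hB1 hz
        simp only [mem_inter, mem_insert] at this
        rcases this.2 with h | h
        · exact absurd (h ▸ this.1) hxE
        · exact h
      have hcZB := card_sdiff_of_subset hBZ
      obtain ⟨S, hS1, hS2⟩ := exists_subset_card_eq (s := Z \ B) (n := r - 1) (by omega)
      have hJ := J_add hBF (J_add hbig (J_sing S (fun b hb => hS b (hZX (mem_sdiff.1 (hS1 hb)).1))))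
      rw [show S.card + 1 + 1 = r + 1 by omega] at hJ
      have h5 := hU _ hJ
      have h6 : X \ (B ∪ (insert x (X.erase x \ Z) ∪ S)) ⊆ (Z \ B) \ S := by
        intro z hz
        simp only [mem_sdiff, mem_union, mem_insert, mem_erase] at hz ⊢
        tauto
      have h7 := card_le_card h6
      rw [card_sdiff_of_subset hS1] at h7
      omega
  · rw [mu_Fam0 hA, hAc, heq]

end P5


section P6
variable {α : Type*} [LinearOrder α]

open Classical in
/-- generic compression -/
noncomputable def cmpr (P : Finset α → Prop) (g : Finset α → Finset α) (F : Finset (Finset α)) :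
    Finset (Finset α) := F.image (fun E => if P E ∧ g E ∉ F then g E else E)

lemma mem_cmpr {P : Finset α → Prop} {g : Finset α → Finset α} {F : Finset (Finset α)} {E : Finset α} :
    E ∈ cmpr P g F ↔ (E ∈ F ∧ ¬ (P E ∧ g E ∉ F)) ∨ ∃ E0 ∈ F, P E0 ∧ g E0 ∉ F ∧ E = g E0 := by
  unfold cmpr
  rw [mem_image]
  constructor
  · rintro ⟨E0, h0, rfl⟩
    split_ifs with h
    · exact Or.inr ⟨E0, h0, h.1, h.2, rfl⟩
    · exact Or.inl ⟨h0, h⟩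
  · rintro (⟨h0, h⟩ | ⟨E0, h0, h1, h2, rfl⟩)
    · exact ⟨E, h0, if_neg h⟩
    · exact ⟨E0, h0, if_pos ⟨h1, h2⟩⟩

lemma cmp_injOn {P : Finset α → Prop} {g : Finset α → Finset α} {F : Finset (Finset α)}
    (hinj : ∀ E E', P E → P E' → g E = g E' → E = E') [DecidablePred fun E => P E ∧ g E ∉ F] :
    Set.InjOn (fun E => if P E ∧ g E ∉ F then g E else E) F := by
  intro E hE E' hE' h
  simp only at h
  split_ifs at h with h1 h2 h2
  · exact hinj _ _ h1.1 h2.1 h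
  · exact absurd (h ▸ hE') h1.2
  · exact absurd (h ▸ hE) h2.2
  · exact h

lemma card_cmp {P : Finset α → Prop} {g : Finset α → Finset α} {F : Finset (Finset α)}
    (hinj : ∀ E E', P E → P E' → g E = g E' → E = E') : (cmpr P g F).card = F.card := by
  classical
  unfold cmpr
  exact card_image_of_injOn (cmp_injOn hinj)

lemma cmp_weight {P : Finset α → Prop} {g : Finset α → Finset α} {F : Finset (Finset α)}
    (hinj : ∀ E E', P E → P E' → g E = g E' → E = E') (w : Finset α → ℕ)
    (hw : ∀ E ∈ F, P E → w (g E) < w E) (hne : cmpr P g F ≠ F) :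
    ∑ E ∈ cmpr P g F, w E < ∑ E ∈ F, w E := by
  classical
  have hmv : ∃ E ∈ F, P E ∧ g E ∉ F := by
    by_contra h
    push Not at h
    apply hne
    ext E
    rw [mem_cmpr]
    constructor
    · rintro (h1 | ⟨E0, h0, h1, h2, _⟩)
      · exact h1.1
      · exact absurd (h _ h0 h1) h2
    · intro h1
      exact Or.inl ⟨h1, fun h2 => h2.2 (h _ h1 h2.1)⟩
  have e : ∑ E ∈ cmpr P g F, w E = ∑ E ∈ F, w (if P E ∧ g E ∉ F then g E else E) := by
    unfold cmpr
    rw [sum_image]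
    exact cmp_injOn hinj
  rw [e]
  obtain ⟨E, hE, h1, h2⟩ := hmv
  apply sum_lt_sum
  · intro E hE
    split_ifs with h
    · exact (hw E hE h.1).le
    · exact le_rfl
  · exact ⟨E, hE, by rw [if_pos ⟨h1, h2⟩]; exact hw E hE h1⟩

def sw (i j : α) (E : Finset α) : Finset α := E.image (Equiv.swap i j)

lemma mem_sw {i j z : α} {E : Finset α} : z ∈ sw i j E ↔ Equiv.swap i j z ∈ E := by
  unfold sw
  rw [mem_image]
  constructor
  · rintro ⟨a, ha, rfl⟩; simpa using ha
  · intro h; exact ⟨_, h, by simp⟩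

lemma sw_i {i j : α} {E : Finset α} : i ∈ sw i j E ↔ j ∈ E := by rw [mem_sw]; simp
lemma sw_j {i j : α} {E : Finset α} : j ∈ sw i j E ↔ i ∈ E := by rw [mem_sw]; simp
lemma sw_o {i j z : α} {E : Finset α} (h1 : z ≠ i) (h2 : z ≠ j) : z ∈ sw i j E ↔ z ∈ E := by
  rw [mem_sw, Equiv.swap_apply_of_ne_of_ne h1 h2]

lemma sw_sw {i j : α} (E : Finset α) : sw i j (sw i j E) = E := by
  ext z; simp [mem_sw]

lemma sw_mono {i j : α} {E E' : Finset α} (h : E ⊆ E') : sw i j E ⊆ sw i j E' := image_subset_image h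

lemma sw_inj {i j : α} {E E' : Finset α} (h : sw i j E = sw i j E') : E = E' := by
  rw [← sw_sw (i := i) (j := j) E, h, sw_sw]

lemma sw_eq {i j : α} {E : Finset α} (h : i ∈ E ↔ j ∈ E) : sw i j E = E := by
  ext z
  by_cases h1 : z = i
  · subst h1; rw [sw_i, h]
  by_cases h2 : z = j
  · subst h2; rw [sw_j, h]
  exact sw_o h1 h2

lemma sw_card {i j : α} (E : Finset α) : (sw i j E).card = E.card :=
  card_image_of_injective _ (Equiv.injective _)

noncomputable def Sh (i j : α) (F : Finset (Finset α)) : Finset (Finset α) :=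
  cmpr (fun E => j ∈ E ∧ i ∉ E) (sw i j) F

lemma mem_Sh {i j : α} {F : Finset (Finset α)} {E : Finset α} :
    E ∈ Sh i j F ↔ (i ∈ E ∧ j ∉ E ∧ (E ∈ F ∨ sw i j E ∈ F)) ∨
      (i ∉ E ∧ j ∈ E ∧ E ∈ F ∧ sw i j E ∈ F) ∨ ((i ∈ E ↔ j ∈ E) ∧ E ∈ F) := by
  unfold Sh
  rw [mem_cmpr]
  constructor
  · rintro (⟨h0, h⟩ | ⟨E0, h0, h1, h2, rfl⟩)
    · tauto
    · left
      rw [sw_i, sw_j, sw_sw]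
      tauto
  · rintro (⟨h1, h2, h3⟩ | ⟨h1, h2, h3⟩ | ⟨h1, h2⟩)
    · by_cases h4 : E ∈ F
      · left; tauto
      · right
        refine ⟨sw i j E, by tauto, ⟨sw_j.2 h1, fun h => h2 (sw_i.1 h)⟩, ?_, (sw_sw E).symm⟩
        rwa [sw_sw]
    · left; tauto
    · left; tauto

lemma Sh_or {i j : α} {F : Finset (Finset α)} {E : Finset α} (h : E ∈ Sh i j F) :
    (E ∈ F ∧ sw i j E ∈ F) ∨ (i ∈ E ∧ (E ∈ F ∨ sw i j E ∈ F)) := by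
  rw [mem_Sh] at h
  rcases h with h | h | ⟨h1, h2⟩
  · tauto
  · tauto
  · left; rw [sw_eq h1]; exact ⟨h2, h2⟩

lemma Sh_mem_or {i j : α} {F : Finset (Finset α)} {E : Finset α} (h : E ∈ F) :
    E ∈ Sh i j F ∨ sw i j E ∈ Sh i j F := by
  rw [mem_Sh, mem_Sh, sw_i, sw_j, sw_sw]
  tauto

lemma card_Sh (i j : α) (F : Finset (Finset α)) : (Sh i j F).card = F.card :=
  card_cmp fun _ _ _ _ h => sw_inj h

lemma Sh_dn {i j : α} {F : Finset (Finset α)} (h : Dn F) : Dn (Sh i j F) := by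
  intro E hE E' hs
  have h1 := sw_mono (i := i) (j := j) hs
  have k1 : E ∈ F → E' ∈ F := fun hh => h _ hh _ hs
  have k2 : sw i j E ∈ F → sw i j E' ∈ F := fun hh => h _ hh _ h1
  have m1 : E' ∈ F ∨ sw i j E' ∈ F := by
    rcases Sh_or hE with h | ⟨_, h | h⟩
    exacts [Or.inl (k1 h.1), Or.inl (k1 h), Or.inr (k2 h)]
  rw [mem_Sh]
  by_cases a : i ∈ E'
  · by_cases b : j ∈ E'
    · have e : sw i j E' = E' := sw_eq (by simp [a, b])
      rw [e] at m1
      exact Or.inr (Or.inr ⟨by simp [a, b], m1.elim id id⟩)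
    · exact Or.inl ⟨a, b, m1⟩
  · by_cases b : j ∈ E'
    · right; left
      refine ⟨a, b, ?_⟩
      by_cases c : i ∈ E
      · have e : sw i j E = E := sw_eq (by simp [c, hs b])
        rw [e] at k2
        have hEF : E ∈ F := by
          rcases Sh_or hE with h | ⟨_, h | h⟩
          exacts [h.1, h, e ▸ h]
        exact ⟨k1 hEF, k2 hEF⟩
      · rcases Sh_or hE with h | ⟨h, _⟩
        · exact ⟨k1 h.1, k2 h.2⟩
        · exact absurd h c
    · have e : sw i j E' = E' := sw_eq (by simp [a, b])
      rw [e] at m1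
      exact Or.inr (Or.inr ⟨by simp [a, b], m1.elim id id⟩)

lemma Sh_sng {i j : α} {X : Finset α} {F : Finset (Finset α)} (hi : i ∈ X) (h : Sng X F) :
    Sng X (Sh i j F) := by
  intro x hx
  have h1 := h x hx
  by_cases a : x = i
  · subst a
    by_cases b : x = j
    · subst b; rw [mem_Sh]; simp [h1]
    · rw [mem_Sh]; left; simp [h1, Ne.symm b]
  · by_cases b : x = j
    · subst b
      rw [mem_Sh]; right; left
      refine ⟨by simpa using Ne.symm a, by simp, h1, ?_⟩
      have := h i hi
      convert this using 1
      simp [sw]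
    · rw [mem_Sh]; right; right; simp [h1, Ne.symm a, Ne.symm b]

lemma sw_X {i j : α} {X : Finset α} (hi : i ∈ X) (hj : j ∈ X) : sw i j X = X := sw_eq (by simp [hi, hj])

lemma Sh_sub {i j : α} {X : Finset α} {F : Finset (Finset α)} (hi : i ∈ X) (hj : j ∈ X)
    (h : ∀ E ∈ F, E ⊆ X) : ∀ E ∈ Sh i j F, E ⊆ X := by
  intro E hE
  have : E ∈ F ∨ sw i j E ∈ F := by have := Sh_or hE; tauto
  rcases this with h1 | h1
  · exact h _ h1
  · have := sw_mono (i := i) (j := j) (h _ h1)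
    rwa [sw_sw, sw_X hi hj] at this

lemma sw_cover {i j : α} {E V : Finset α} (hE : i ∈ E) (hV : i ∈ V) : E ∪ V ⊆ E ∪ sw i j V := by
  intro z hz
  by_cases h1 : z = i
  · subst h1; simp [hE]
  by_cases h2 : z = j
  · subst h2; simp [sw_j, hV]
  simpa [sw_o h1 h2] using hz

lemma sw_union {i j : α} (E V : Finset α) : sw i j (E ∪ V) = sw i j E ∪ sw i j V := image_union _ _

def Cov (F : Finset (Finset α)) (r : ℕ) (V : Finset α) : Prop := ∃ W, J F r W ∧ V ⊆ W

lemma Sh_J {i j : α} {F : Finset (Finset α)} : ∀ {r : ℕ} {V : Finset α}, J (Sh i j F) r V →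
    ((Cov F r (V)) ∧ (Cov F r (sw i j V))) ∨
    (i ∈ V ∧ ((Cov F r (V)) ∨ (Cov F r (sw i j V))))
  | 0, V, h => by
    simp only [J] at h
    subst h
    left
    exact ⟨⟨∅, rfl, by simp⟩, ⟨∅, rfl, by simp [sw]⟩⟩
  | r + 1, _, ⟨E, hE, V, hV, rfl⟩ => by
    have ih := Sh_J hV
    have hE' := Sh_or hE
    have c1 : E ∈ F → (Cov F r (V)) → Cov F (r + 1) (E ∪ V) := by
      rintro h ⟨W, h1, h2⟩
      exact ⟨E ∪ W, J_add h h1, union_subset_union subset_rfl h2⟩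
    have c2 : sw i j E ∈ F → (Cov F r (sw i j V)) →
        Cov F (r + 1) (sw i j (E ∪ V)) := by
      rintro h ⟨W, h1, h2⟩
      exact ⟨_, J_add h h1, by rw [sw_union]; exact union_subset_union subset_rfl h2⟩
    have c3 : i ∈ E → i ∈ V → E ∈ F → (Cov F r (sw i j V)) →
        Cov F (r + 1) (E ∪ V) := by
      rintro hi hi' h ⟨W, h1, h2⟩
      exact ⟨E ∪ W, J_add h h1, (sw_cover hi hi').trans (union_subset_union subset_rfl h2)⟩
    have c4 : i ∈ E → i ∈ V → sw i j E ∈ F → (Cov F r (V)) →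
        Cov F (r + 1) (E ∪ V) := by
      rintro hi hi' h ⟨W, h1, h2⟩
      refine ⟨_, J_add h h1, ?_⟩
      have := sw_cover (j := j) hi' hi
      rw [union_comm E, union_comm (sw i j E)]
      exact this.trans (union_subset_union h2 subset_rfl)
    rw [mem_union]
    clear hE hV
    generalize Cov F r V = p1 at *
    generalize Cov F r (sw i j V) = p2 at *
    generalize Cov F (r + 1) (E ∪ V) = p3 at *
    generalize Cov F (r + 1) (sw i j (E ∪ V)) = p4 at *
    tauto

lemma Sh_un {i j : α} {X : Finset α} {F : Finset (Finset α)} {r t : ℕ} (hi : i ∈ X) (hj : j ∈ X)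
    (h : Un r t X F) : Un r t X (Sh i j F) := by
  intro U hU
  have : (Cov F r (U)) ∨ (Cov F r (sw i j U)) := by
    rcases Sh_J hU with h | h; exacts [Or.inl h.1, h.2]
  rcases this with ⟨W, h1, h2⟩ | ⟨W, h1, h2⟩
  · exact (h W h1).trans (card_le_card (sdiff_subset_sdiff subset_rfl h2))
  · refine (h W h1).trans ((card_le_card (sdiff_subset_sdiff subset_rfl h2)).trans ?_)
    have : X \ sw i j U = sw i j (X \ U) := by
      nth_rewrite 1 [← sw_X hi hj]
      ext z; simp [mem_sw]
    rw [this, sw_card]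

lemma mem_Fam0 {X A E : Finset α} : E ∈ Fam0 X A ↔ E ⊆ X ∧ (E ∩ A).card ≤ 1 := by
  simp [Fam0]

lemma card_ge_two {E : Finset α} {a b : α} (ha : a ∈ E) (hb : b ∈ E) (h : a ≠ b) : 2 ≤ E.card :=
  one_lt_card.2 ⟨a, ha, b, hb, h⟩

lemma unshift {r t : ℕ} (hr : 3 ≤ r) (ht1 : 1 ≤ t) {i j : α} {X A : Finset α} {F : Finset (Finset α)}
    (hij : i ≠ j) (hi : i ∈ X) (hj : j ∈ X) (hA : A ⊆ X) (hAc : A.card = r + t)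
    (hsub : ∀ E ∈ F, E ⊆ X) (hdn : Dn F) (hS : Sng X F) (hU : Un r t X F) (hF : Sh i j F = Fam0 X A) :
    ∃ A' ⊆ X, A'.card = r + t ∧ F = Fam0 X A' := by
  have hcard : F.card = (A.card + 1) * 2 ^ (X.card - A.card) := by
    rw [← card_filter_inter_le hA, ← hF, card_Sh]
  have fin : ∀ A' ⊆ X, A'.card = r + t → F ⊆ Fam0 X A' → ∃ A' ⊆ X, A'.card = r + t ∧ F = Fam0 X A' := by
    intro A' h1 h2 h3
    refine ⟨A', h1, h2, eq_of_subset_of_card_le h3 ?_⟩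
    rw [card_filter_inter_le h1, hcard, h2, hAc]
  by_cases hiA : i ∈ A
  · by_cases hjA : j ∈ A
    · apply fin A hA hAc
      intro E hE
      rcases Sh_mem_or (i := i) (j := j) hE with h | h
      · rwa [hF] at h
      · rw [hF, mem_Fam0] at h
        rw [mem_Fam0]
        refine ⟨hsub E hE, ?_⟩
        have e : sw i j E ∩ A = sw i j (E ∩ A) := by
          nth_rewrite 1 [← sw_eq (i := i) (j := j) (E := A) (by simp [hiA, hjA])]
          ext z; simp [mem_sw]
        rw [e, sw_card] at h
        exact h.2
    · exfalso
      obtain ⟨a, ha⟩ := card_pos.1 (show 0 < (A.erase i).card by rw [card_erase_of_mem hiA]; omega)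
      rw [mem_erase] at ha
      have haj : a ≠ j := by rintro rfl; exact hjA ha.2
      have h1 : {a, j} ∈ Sh i j F := by
        rw [hF, mem_Fam0]
        refine ⟨by intro z; simp only [mem_insert, mem_singleton]; rintro (rfl | rfl); exacts [hA ha.2, hj], ?_⟩
        have : ({a, j} : Finset α) ∩ A ⊆ {a} := by
          intro z; simp only [mem_inter, mem_insert, mem_singleton]
          rintro ⟨rfl | rfl, h⟩
          · rfl
          · exact absurd h hjA
        exact (card_le_card this).trans (by simp)
      have h2 : sw i j {a, j} ∈ F := by
        rw [mem_Sh] at h1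
        simp [hij, ha.1.symm] at h1
        exact h1.2
      have h3 : sw i j {a, j} ∈ Sh i j F := by
        rw [mem_Sh]; left
        rw [sw_i, sw_j]
        simp [hij, ha.1.symm, h2]
      rw [hF, mem_Fam0] at h3
      have := card_ge_two (E := sw i j {a, j} ∩ A) (a := a) (b := i)
        (mem_inter.2 ⟨(sw_o ha.1 haj).2 (by simp), ha.2⟩) (mem_inter.2 ⟨sw_i.2 (by simp), hiA⟩) ha.1
      omega
  by_cases hjA : j ∈ A
  swap
  · apply fin A hA hAc
    intro E hE
    rcases Sh_mem_or (i := i) (j := j) hE with h | h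
    · rwa [hF] at h
    · rw [hF, mem_Fam0] at h
      rw [mem_Fam0]
      refine ⟨hsub E hE, ?_⟩
      have e : sw i j E ∩ A = sw i j (E ∩ A) := by
        nth_rewrite 1 [← sw_eq (i := i) (j := j) (E := A) (by simp [hiA, hjA])]
        ext z; simp [mem_sw]
      rw [e, sw_card] at h
      exact h.2
  -- main case
  have hA'X : insert i (A.erase j) ⊆ X := insert_subset hi ((erase_subset _ _).trans hA)
  have hA'c : (insert i (A.erase j)).card = r + t := by
    rw [card_insert_of_notMem (by simp [hiA]), card_erase_of_mem hjA]; omega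
  have key0 : ∀ E ∈ F, (E ∩ A.erase j).card ≤ 1 := by
    intro E hE
    rcases Sh_mem_or (i := i) (j := j) hE with h | h
    · rw [hF, mem_Fam0] at h
      exact (card_le_card (inter_subset_inter subset_rfl (erase_subset _ _))).trans h.2
    · rw [hF, mem_Fam0] at h
      refine (card_le_card ?_).trans h.2
      intro z hz
      simp only [mem_inter, mem_erase] at hz ⊢
      refine ⟨(sw_o ?_ hz.2.1).2 hz.1, hz.2.2⟩
      rintro rfl; exact hiA hz.2.2
  by_cases h1 : ∃ a ∈ A.erase j, {a, j} ∈ F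
  swap
  · apply fin A hA hAc
    intro E hE
    rw [mem_Fam0]
    refine ⟨hsub E hE, ?_⟩
    by_cases hjE : j ∈ E
    · have : E ∩ A ⊆ {j} := by
        intro z hz
        rw [mem_inter] at hz
        rw [mem_singleton]
        by_contra hzj
        refine h1 ⟨z, mem_erase.2 ⟨hzj, hz.2⟩, hdn E hE _ ?_⟩
        intro y; simp only [mem_insert, mem_singleton]
        rintro (rfl | rfl)
        exacts [hz.1, hjE]
      exact (card_le_card this).trans (by simp)
    · refine (card_le_card ?_).trans (key0 E hE)
      intro z hz
      rw [mem_inter] at hz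
      refine mem_inter.2 ⟨hz.1, mem_erase.2 ⟨?_, hz.2⟩⟩
      rintro rfl; exact hjE hz.1
  by_cases h2 : ∃ b ∈ A.erase j, {b, i} ∈ F
  swap
  · apply fin _ hA'X hA'c
    intro E hE
    rw [mem_Fam0]
    refine ⟨hsub E hE, ?_⟩
    by_cases hiE : i ∈ E
    · have : E ∩ insert i (A.erase j) ⊆ {i} := by
        intro z hz
        rw [mem_inter, mem_insert] at hz
        rw [mem_singleton]
        by_contra hzi
        refine h2 ⟨z, by tauto, hdn E hE _ ?_⟩
        intro y; simp only [mem_insert, mem_singleton]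
        rintro (rfl | rfl)
        exacts [hz.1, hiE]
      exact (card_le_card this).trans (by simp)
    · refine (card_le_card ?_).trans (key0 E hE)
      intro z hz
      rw [mem_inter, mem_insert] at hz
      rcases hz.2 with rfl | h
      · exact absurd hz.1 hiE
      · exact mem_inter.2 ⟨hz.1, h⟩
  exfalso
  obtain ⟨a, ha, haF⟩ := h1
  obtain ⟨b, hb, hbF⟩ := h2
  have ha' := mem_erase.1 ha
  have hb' := mem_erase.1 hb
  have hai : a ≠ i := by rintro rfl; exact hiA ha'.2
  by_cases hab : a = b
  · subst hab
    have h3 : {a, j} ∈ Sh i j F := by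
      rw [mem_Sh]; right; left
      refine ⟨by simp [hij, hai.symm], by simp, haF, ?_⟩
      convert hbF using 1
      simp [sw, image_insert, Equiv.swap_apply_of_ne_of_ne hai ha'.1]
    rw [hF, mem_Fam0] at h3
    have := card_ge_two (E := ({a, j} : Finset α) ∩ A) (a := a) (b := j)
      (by simp [ha'.2]) (by simp [hjA]) ha'.1
    omega
  have hcA : (((A.erase j).erase a).erase b).card = r + t - 3 := by
    rw [card_erase_of_mem (mem_erase.2 ⟨Ne.symm hab, hb⟩), card_erase_of_mem ha, card_erase_of_mem hjA]
    omega
  obtain ⟨S, hS1, hS2⟩ := exists_subset_card_eq (s := ((A.erase j).erase a).erase b) (n := r - 2) (by omega)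
  obtain ⟨c, hc⟩ := card_pos.1 (show 0 < S.card by omega)
  have hcA' := hS1 hc
  simp only [mem_erase] at hcA'
  have hO : insert c (X \ insert i A) ∈ F := by
    have h3 : insert c (X \ insert i A) ∈ Sh i j F := by
      rw [hF, mem_Fam0]
      refine ⟨insert_subset (hA hcA'.2.2.2) sdiff_subset, ?_⟩
      have : insert c (X \ insert i A) ∩ A ⊆ {c} := by
        intro z; simp only [mem_inter, mem_insert, mem_sdiff, mem_singleton]; tauto
      exact (card_le_card this).trans (by simp)
    have hci : i ≠ c := by rintro rfl; exact hiA hcA'.2.2.2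
    rw [mem_Sh] at h3
    simp [hjA, hcA'.2.2.1.symm, hci] at h3
    exact h3
  have hJ := J_add haF (J_add hbF (J_add hO (J_sing (S.erase c) (fun b hb => by
    have := hS1 (mem_erase.1 hb).2
    simp only [mem_erase] at this
    exact hS b (hA this.2.2.2)))))
  rw [card_erase_of_mem hc, show S.card - 1 + 1 + 1 + 1 = r by omega] at hJ
  have h5 := hU _ hJ
  have h6 : X \ ({a, j} ∪ ({b, i} ∪ (insert c (X \ insert i A) ∪ S.erase c))) ⊆
      ((A.erase j).erase a).erase b \ S := by
    intro z hz
    simp only [mem_sdiff, mem_union, mem_insert, mem_singleton, mem_erase] at hz ⊢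
    tauto
  have h7 := card_le_card h6
  rw [card_sdiff_of_subset hS1] at h7
  omega

def rk (X : Finset α) (x : α) : ℕ := (X.filter (· < x)).card

lemma rk_lt {X : Finset α} {i j : α} (hi : i ∈ X) (hij : i < j) : rk X i < rk X j := by
  apply card_lt_card
  refine ⟨fun z => ?_, fun h => ?_⟩
  · simp only [mem_filter]; exact fun h => ⟨h.1, h.2.trans hij⟩
  · have := h (mem_filter.2 ⟨hi, hij⟩)
    simp at this

lemma sw_ins {i j : α} {E : Finset α} (hj : j ∈ E) (hi : i ∉ E) : sw i j E = insert i (E.erase j) := by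
  have hij : i ≠ j := by rintro rfl; exact hi hj
  ext z
  by_cases h1 : z = i
  · subst h1; simp [sw_i, hj]
  by_cases h2 : z = j
  · subst h2; simp [sw_j, hi, hij.symm]
  simp [sw_o, h1, h2]

theorem down_main {r t : ℕ} (hr : 3 ≤ r) (ht1 : 1 ≤ t) (ht : r + t + 2 ≤ 2 ^ r)
    {X : Finset α} : ∀ (N : ℕ) (F : Finset (Finset α)), ∑ E ∈ F, ∑ x ∈ E, rk X x ≤ N →
    (∀ E ∈ F, E ⊆ X) → Dn F → Sng X F → Un r t X F →
    mu X F ≤ ((r + t + 1 : ℕ) : ℚ) / 2 ^ (r + t) ∧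
    (mu X F = ((r + t + 1 : ℕ) : ℚ) / 2 ^ (r + t) → ∃ A ⊆ X, A.card = r + t ∧ F = Fam0 X A) := by
  intro N
  induction N using Nat.strong_induction_on with
  | _ N ih =>
  intro F hN hsub hdn hS hU
  by_cases hfix : ∀ i ∈ X, ∀ j ∈ X, i < j → Sh i j F = F
  · apply shifted_main hr ht1 ht ⟨hsub, hdn, ?_⟩ hS hU
    intro E hE j hj i hi hiE hij
    have h1 : Sh i j F = F := hfix i hi j (hsub E hE hj) hij
    have h2 : sw i j E ∈ Sh i j F := by
      rw [mem_Sh, sw_i, sw_j, sw_sw]; left; exact ⟨hj, hiE, Or.inr hE⟩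
    rw [h1, sw_ins hj hiE] at h2
    exact h2
  · push Not at hfix
    obtain ⟨i, hi, j, hj, hij, hne⟩ := hfix
    have hlt : ∑ E ∈ Sh i j F, ∑ x ∈ E, rk X x < ∑ E ∈ F, ∑ x ∈ E, rk X x := by
      refine cmp_weight (fun _ _ _ _ h => sw_inj h) (fun E => ∑ x ∈ E, rk X x) ?_ hne
      rintro E hE ⟨h1, h2⟩
      rw [sw_ins h1 h2, sum_insert (by simp [h2]), ← add_sum_erase E _ h1]
      have := rk_lt hi hij
      omega
    have hmu : mu X (Sh i j F) = mu X F := by unfold mu; rw [card_Sh]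
    have := ih _ (by omega) (Sh i j F) le_rfl (Sh_sub hi hj hsub) (Sh_dn hdn) (Sh_sng hi hS) (Sh_un hi hj hU)
    rw [hmu] at this
    refine ⟨this.1, fun h => ?_⟩
    obtain ⟨A, hA, hAc, hF⟩ := this.2 h
    exact unshift hr ht1 hij.ne hi hj hA hAc hsub hdn hS hU hF

end P6


section P7
variable {α : Type*} [LinearOrder α]

/-- `K X F r P N`: `P` / `N` are the points of `X` lying in all / none of some `r` members of `F`. -/
def K (X : Finset α) (F : Finset (Finset α)) : ℕ → Finset α → Finset α → Prop
  | 0, P, N => P = X ∧ N = X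
  | r + 1, P, N => ∃ E ∈ F, ∃ P' N', K X F r P' N' ∧ P = P' ∩ E ∧ N = N' \ E

def Agr (r t : ℕ) (X : Finset α) (F : Finset (Finset α)) : Prop :=
  ∀ P N, K X F r P N → t ≤ (P ∪ N).card

def NT (X : Finset α) (F : Finset (Finset α)) : Prop :=
  ∀ x ∈ X, (∃ E ∈ F, x ∉ E) ∧ (∃ E ∈ F, x ∈ E)

lemma K_add {X : Finset α} {F : Finset (Finset α)} {E P N : Finset α} {r : ℕ} (hE : E ∈ F)
    (h : K X F r P N) : K X F (r + 1) (P ∩ E) (N \ E) := ⟨E, hE, P, N, h, rfl, rfl⟩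

lemma K_disj {X : Finset α} {F : Finset (Finset α)} {P N : Finset α} {r : ℕ} (h : K X F r P N)
    (hr : 1 ≤ r) {x : α} (h1 : x ∈ P) (h2 : x ∈ N) : False := by
  obtain ⟨r, rfl⟩ : ∃ s, r = s + 1 := ⟨r - 1, by omega⟩
  obtain ⟨E, hE, P', N', _, rfl, rfl⟩ := h
  exact (mem_sdiff.1 h2).2 (mem_inter.1 h1).2

lemma K_sub {X : Finset α} {F : Finset (Finset α)} : ∀ {r : ℕ} {P N : Finset α}, K X F r P N →
    P ⊆ X ∧ N ⊆ X
  | 0, _, _, ⟨h1, h2⟩ => by rw [h1, h2]; exact ⟨subset_rfl, subset_rfl⟩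
  | r + 1, _, _, ⟨E, hE, P', N', h, h1, h2⟩ => by
    have := K_sub h
    rw [h1, h2]
    exact ⟨inter_subset_left.trans this.1, sdiff_subset.trans this.2⟩

lemma Agr.succ {X : Finset α} {F : Finset (Finset α)} {k t : ℕ} (h : Agr (k + 1) t X F) (hk : 1 ≤ k)
    (hn : NT X F) (ht : 1 ≤ t) : Agr k (t + 1) X F := by
  intro P N hK
  have hF : ∃ E, E ∈ F := by
    obtain ⟨k, rfl⟩ : ∃ s, k = s + 1 := ⟨k - 1, by omega⟩
    obtain ⟨E, hE, _⟩ := hK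
    exact ⟨E, hE⟩
  obtain ⟨E, hE⟩ := hF
  have h1 := h _ _ (K_add hE hK)
  obtain ⟨z, hz⟩ := card_pos.1 (show 0 < (P ∩ E ∪ N \ E).card by omega)
  have hs := K_sub hK
  have hzPN : z ∈ P ∪ N := by
    simp only [mem_union, mem_inter, mem_sdiff] at hz ⊢; tauto
  have hzX : z ∈ X := by
    rcases mem_union.1 hzPN with h | h
    exacts [hs.1 h, hs.2 h]
  have hd : z ∈ P → z ∈ N → False := K_disj hK hk
  have : ∃ E ∈ F, z ∉ P ∩ E ∪ N \ E := by
    by_cases hzP : z ∈ P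
    · obtain ⟨E, hE, hzE⟩ := (hn z hzX).1
      refine ⟨E, hE, ?_⟩
      simp only [mem_union, mem_inter, mem_sdiff]; tauto
    · obtain ⟨E, hE, hzE⟩ := (hn z hzX).2
      refine ⟨E, hE, ?_⟩
      simp only [mem_union, mem_inter, mem_sdiff]; tauto
  obtain ⟨E', hE', hz'⟩ := this
  have h2 := h _ _ (K_add hE' hK)
  have h3 : P ∩ E' ∪ N \ E' ⊆ (P ∪ N).erase z := by
    intro y hy
    rw [mem_erase]
    refine ⟨by rintro rfl; exact hz' hy, ?_⟩
    simp only [mem_union, mem_inter, mem_sdiff] at hy ⊢; tauto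
  have h4 := card_le_card h3
  rw [card_erase_of_mem hzPN] at h4
  have := card_pos.2 ⟨z, hzPN⟩
  omega

lemma K_erase {X : Finset α} {F : Finset (Finset α)} {x : α} : ∀ {r : ℕ} {P N : Finset α},
    K (X.erase x) F r P N → ∃ P' N', K X F r P' N' ∧ P'.erase x ⊆ P ∧ N'.erase x ⊆ N
  | 0, _, _, ⟨h1, h2⟩ => ⟨X, X, ⟨rfl, rfl⟩, by rw [h1], by rw [h2]⟩
  | r + 1, _, _, ⟨E, hE, P0, N0, h, h1, h2⟩ => by
    obtain ⟨P', N', hK, hP, hN⟩ := K_erase h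
    refine ⟨_, _, K_add hE hK, ?_, ?_⟩
    · rw [h1]; intro z hz
      have := @hP z
      simp only [mem_erase, mem_inter] at *; tauto
    · rw [h2]; intro z hz
      have := @hN z
      simp only [mem_erase, mem_sdiff] at *; tauto

lemma Agr.erase {X : Finset α} {F : Finset (Finset α)} {x : α} {r t : ℕ} (h : Agr r t X F) :
    Agr r (t - 1) (X.erase x) F := by
  intro P N hK
  obtain ⟨P', N', hK', hP, hN⟩ := K_erase hK
  have h1 := h _ _ hK'
  have h2 : (P' ∪ N').erase x ⊆ P ∪ N := by
    intro z hz
    have h1 := @hP z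
    have h2 := @hN z
    simp only [mem_erase, mem_union] at *; tauto
  have h3 := card_le_card h2
  have := pred_card_le_card_erase (s := P' ∪ N') (a := x)
  omega

noncomputable def Dx (x : α) (F : Finset (Finset α)) : Finset (Finset α) :=
  cmpr (fun E => x ∈ E) (fun E => E.erase x) F

lemma erase_inj' {x : α} (E E' : Finset α) (h1 : x ∈ E) (h2 : x ∈ E') (h : E.erase x = E'.erase x) :
    E = E' := by
  rw [← insert_erase h1, h, insert_erase h2]

lemma mem_Dx {x : α} {F : Finset (Finset α)} {E : Finset α} :
    E ∈ Dx x F ↔ (x ∈ E ∧ E ∈ F ∧ E.erase x ∈ F) ∨ (x ∉ E ∧ (E ∈ F ∨ insert x E ∈ F)) := by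
  unfold Dx
  rw [mem_cmpr]
  constructor
  · rintro (⟨h0, h⟩ | ⟨E0, h0, h1, h2, rfl⟩)
    · tauto
    · right
      rw [insert_erase h1]
      simp [h0]
  · rintro (⟨h1, h2, h3⟩ | ⟨h1, h2⟩)
    · left; tauto
    · by_cases h4 : E ∈ F
      · left; tauto
      · right
        exact ⟨insert x E, by tauto, mem_insert_self _ _, by rwa [erase_insert h1], (erase_insert h1).symm⟩

lemma card_Dx (x : α) (F : Finset (Finset α)) : (Dx x F).card = F.card := card_cmp erase_inj'

lemma erase_mem_Dx {x : α} {F : Finset (Finset α)} {E : Finset α} (h : E ∈ F) : E.erase x ∈ Dx x F := by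
  rw [mem_Dx]; right
  by_cases hx : x ∈ E
  · rw [insert_erase hx]; simp [h]
  · rw [erase_eq_of_notMem hx]; simp [h, hx]

def Cv (x : α) (X : Finset α) (F : Finset (Finset α)) (r : ℕ) (P N : Finset α) (q : Finset α → Finset α → Prop) :
    Prop := ∃ P' N', K X F r P' N' ∧ P'.erase x ⊆ P ∧ N'.erase x ⊆ N ∧ q P' N'

lemma Cv.add {x : α} {X : Finset α} {F : Finset (Finset α)} {r : ℕ} {P N : Finset α}
    {q q' : Finset α → Finset α → Prop} (h : Cv x X F r P N q) {E G : Finset α} (hG : G ∈ F)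
    (hEG : G.erase x = E.erase x) (hq : ∀ P' N', K X F r P' N' → q P' N' → q' (P' ∩ G) (N' \ G)) :
    Cv x X F (r + 1) (P ∩ E) (N \ E) q' := by
  obtain ⟨P', N', hK, hP, hN, hh⟩ := h
  have e : ∀ z, z ≠ x → (z ∈ G ↔ z ∈ E) := by
    intro z hz
    have : z ∈ G.erase x ↔ z ∈ E.erase x := by rw [hEG]
    simpa [hz] using this
  refine ⟨_, _, K_add hG hK, ?_, ?_, hq _ _ hK hh⟩
  · intro z hz
    have h1 := @hP z
    have := e z
    simp only [mem_erase, mem_inter] at *; tauto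
  · intro z hz
    have h1 := @hN z
    have := e z
    simp only [mem_erase, mem_sdiff] at *; tauto

lemma Dx_K {x : α} {X : Finset α} {F : Finset (Finset α)} (hx : x ∈ X) : ∀ {r : ℕ} {P N : Finset α},
    K X (Dx x F) r P N →
    Cv x X F r P N (fun _ _ => True) ∧
    (x ∉ N → Cv x X F r P N (fun _ N' => x ∉ N') ∧ Cv x X F r P N (fun P' _ => x ∉ P')) ∧
    (x ∉ N → x ∉ P → Cv x X F r P N (fun P' N' => x ∉ P' ∧ x ∉ N'))
  | 0, _, _, ⟨h1, h2⟩ => by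
    subst h1 h2
    exact ⟨⟨_, _, ⟨rfl, rfl⟩, erase_subset _ _, erase_subset _ _, trivial⟩,
      fun h => absurd hx h, fun h => absurd hx h⟩
  | r + 1, _, _, ⟨E, hE, P, N, h, h1, h2⟩ => by
    subst h1 h2
    obtain ⟨c1, c2, c3⟩ := Dx_K hx h
    rw [mem_Dx] at hE
    rcases hE with ⟨hxE, hEF, hE'F⟩ | ⟨hxE, hEF⟩
    · refine ⟨c1.add hEF rfl (fun _ _ _ _ => trivial), fun _ => ⟨?_, ?_⟩, fun _ hP => ?_⟩
      · exact c1.add hEF rfl (fun P' N' _ _ => by simp [hxE])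
      · exact c1.add hE'F (by simp) (fun P' N' _ _ => by simp)
      · have hP' : x ∉ P := by simpa [hxE] using hP
        by_cases hN : x ∈ N
        · have hr : 1 ≤ r := by
            by_contra hr
            obtain rfl : r = 0 := by omega
            rw [h.1] at hP'
            exact hP' hx
          obtain ⟨P', N', hK, k1, k2, _⟩ := c1
          by_cases hxP : x ∈ P'
          · have c : Cv x X F r P N (fun _ N' => x ∉ N') := ⟨P', N', hK, k1, k2, fun h => K_disj hK hr hxP h⟩
            exact c.add hE'F (by simp) (fun P' N' _ h => by simp [h])
          · have c : Cv x X F r P N (fun P' _ => x ∉ P') := ⟨P', N', hK, k1, k2, hxP⟩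
            exact c.add hEF rfl (fun P' N' _ h => by simp [h, hxE])
        · exact (c3 hN hP').add hEF rfl (fun P' N' _ h => by simp [h])
    · have : ∃ G ∈ F, G.erase x = E.erase x := by
        rcases hEF with h | h
        · exact ⟨E, h, rfl⟩
        · exact ⟨_, h, by simp⟩
      obtain ⟨G, hG, hGE⟩ := this
      refine ⟨c1.add hG hGE (fun _ _ _ _ => trivial), fun hN => ?_, fun hN hP => ?_⟩
      · have hN' : x ∉ N := by simpa [hxE] using hN
        exact ⟨(c2 hN').1.add hG hGE (fun P' N' _ h => by simp [h]),
          (c2 hN').2.add hG hGE (fun P' N' _ h => by simp [h])⟩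
      · have hN' : x ∉ N := by simpa [hxE] using hN
        by_cases hxG : x ∈ G
        · exact (c2 hN').2.add hG hGE (fun P' N' _ h => by simp [h, hxG])
        · exact (c2 hN').1.add hG hGE (fun P' N' _ h => by simp [h, hxG])

lemma Agr.Dx {x : α} {X : Finset α} {F : Finset (Finset α)} (hx : x ∈ X) {r t : ℕ} (h : Agr r t X F) :
    Agr r t X (Dx x F) := by
  intro P N hK
  obtain ⟨c1, _, c3⟩ := Dx_K hx hK
  have : ∃ P' N', K X F r P' N' ∧ P' ∪ N' ⊆ P ∪ N := by
    by_cases hx' : x ∈ P ∪ N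
    · obtain ⟨P', N', k0, k1, k2, _⟩ := c1
      refine ⟨P', N', k0, fun z hz => ?_⟩
      by_cases hzx : z = x
      · rwa [hzx]
      · have h1 := @k1 z
        have h2 := @k2 z
        simp only [mem_erase, mem_union] at *; tauto
    · rw [mem_union, not_or] at hx'
      obtain ⟨P', N', k0, k1, k2, k3, k4⟩ := c3 hx'.2 hx'.1
      refine ⟨P', N', k0, union_subset_union ?_ ?_⟩
      · rwa [erase_eq_of_notMem k3] at k1
      · rwa [erase_eq_of_notMem k4] at k2
  obtain ⟨P', N', k0, k1⟩ := this
  exact (h _ _ k0).trans (card_le_card k1)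

def Fam (X A R : Finset α) : Finset (Finset α) :=
  X.powerset.filter (fun E => ((E ∆ R) ∩ A).card ≤ 1)

lemma mem_Fam {X A R E : Finset α} : E ∈ Fam X A R ↔ E ⊆ X ∧ ((E ∆ R) ∩ A).card ≤ 1 := by
  simp [Fam]

lemma sd_sub {X E R : Finset α} (hE : E ⊆ X) (hR : R ⊆ X) : E ∆ R ⊆ X := by
  intro z hz
  rw [mem_symmDiff] at hz
  rcases hz with h | h
  exacts [hE h.1, hR h.1]

lemma card_Fam {X A R : Finset α} (hA : A ⊆ X) (hR : R ⊆ A) :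
    (Fam X A R).card = (A.card + 1) * 2 ^ (X.card - A.card) := by
  rw [← card_filter_inter_le hA]
  have : Fam X A R = (Fam0 X A).image (fun E => E ∆ R) := by
    ext E
    rw [mem_Fam, mem_image]
    constructor
    · rintro ⟨h1, h2⟩
      exact ⟨E ∆ R, mem_Fam0.2 ⟨sd_sub h1 (hR.trans hA), h2⟩, symmDiff_symmDiff_cancel_right _ _⟩
    · rintro ⟨B, hB, rfl⟩
      rw [mem_Fam0] at hB
      rw [symmDiff_symmDiff_cancel_right]
      exact ⟨sd_sub hB.1 (hR.trans hA), hB.2⟩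
  rw [this, card_image_of_injective _ (symmDiff_left_injective R)]

/-- `E` differs from `R` on `A0` exactly in `a` -/
def Qd (A0 R E : Finset α) (a : α) : Prop := ∀ z ∈ A0, (z ∈ E ↔ (z ∈ R ↔ z ≠ a))

set_option maxHeartbeats 2000000 in
lemma unsquash {r t : ℕ} (hr : 3 ≤ r) (ht1 : 1 ≤ t) {x : α} {X A R : Finset α} {F : Finset (Finset α)}
    (hx : x ∈ X) (hA : A ⊆ X) (hR : R ⊆ A) (hAc : A.card = r + t)
    (hsub : ∀ E ∈ F, E ⊆ X) (hU : Agr r t X F) (hF : Dx x F = Fam X A R) :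
    ∃ A' R', A' ⊆ X ∧ R' ⊆ A' ∧ A'.card = r + t ∧ F = Fam X A' R' := by
  have hcard : F.card = (A.card + 1) * 2 ^ (X.card - A.card) := by
    rw [← card_Fam hA hR, ← hF, card_Dx]
  have fin : ∀ R' ⊆ A, F ⊆ Fam X A R' →
      ∃ A' R', A' ⊆ X ∧ R' ⊆ A' ∧ A'.card = r + t ∧ F = Fam X A' R' := by
    intro R' h1 h3
    refine ⟨A, R', hA, h1, hAc, eq_of_subset_of_card_le h3 ?_⟩
    rw [card_Fam hA h1, hcard]
  have hRX := hR.trans hA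
  have hER : ∀ E ∈ F, ((E.erase x ∆ R) ∩ A).card ≤ 1 := by
    intro E hE
    have := erase_mem_Dx (x := x) hE
    rw [hF, mem_Fam] at this
    exact this.2
  by_cases hxA : x ∈ A
  swap
  · apply fin R hR
    intro E hE
    rw [mem_Fam]
    refine ⟨hsub E hE, ?_⟩
    have e : (E ∆ R) ∩ A = (E.erase x ∆ R) ∩ A := by
      ext z
      simp only [mem_inter, mem_symmDiff, mem_erase]
      by_cases hz : z = x
      · subst hz; simp [hxA]
      · simp [hz]
    rw [e]; exact hER E hE
  have hA0c : (A.erase x).card = r + t - 1 := by rw [card_erase_of_mem hxA]; omega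
  have hxR : x ∉ R := by
    intro hxR
    obtain ⟨a, ha⟩ := card_pos.1 (show 0 < (A.erase x).card by omega)
    have ha' := mem_erase.1 ha
    have h1 : R ∆ {a} ∈ Dx x F := by
      rw [hF, mem_Fam]
      refine ⟨sd_sub hRX (by simpa using hA ha'.2), ?_⟩
      rw [symmDiff_comm R, symmDiff_symmDiff_cancel_right]
      exact (card_le_card inter_subset_left).trans (by simp)
    rw [mem_Dx] at h1
    have hxm : x ∈ R ∆ {a} := by
      rw [mem_symmDiff]; left; simp [hxR, ha'.1.symm]
    have h2 : R ∆ {a} ∈ F := by tauto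
    have h3 := hER _ h2
    have := card_ge_two (E := ((R ∆ {a}).erase x ∆ R) ∩ A) (a := a) (b := x)
      (by simp only [mem_inter, mem_symmDiff, mem_erase, mem_singleton]
          have := ha'.1
          have := ha'.2
          tauto)
      (by simp only [mem_inter, mem_symmDiff, mem_erase, mem_singleton]; tauto) ha'.1
    omega
  have hd0 : ∀ E ∈ F, ((E ∆ R) ∩ A.erase x).card ≤ 1 := by
    intro E hE
    refine (card_le_card ?_).trans (hER E hE)
    intro z
    simp only [mem_inter, mem_symmDiff, mem_erase]; tauto
  have hQ : ∀ E, ∀ a, (E ∆ R) ∩ A.erase x = {a} → a ∈ A.erase x ∧ Qd (A.erase x) R E a := by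
    intro E a h
    constructor
    · have : a ∈ (E ∆ R) ∩ A.erase x := by rw [h]; simp
      exact (mem_inter.1 this).2
    · intro z hz
      have : z ∈ (E ∆ R) ∩ A.erase x ↔ z ∈ ({a} : Finset α) := by rw [h]
      rw [mem_inter, mem_symmDiff, mem_singleton] at this
      tauto
  -- existence
  have hex : ∀ c ∈ A.erase x, ∀ W : Finset α, ∃ H ∈ F, Qd (A.erase x) R H c ∧ ∀ z ∈ X, z ∉ A → (z ∈ H ↔ z ∉ W) := by
    intro c hc W
    have hc' := mem_erase.1 hc
    have h1 : (R ∆ {c}) ∪ ((X \ A) \ W) ∈ Dx x F := by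
      rw [hF, mem_Fam]
      refine ⟨union_subset (sd_sub hRX (by simpa using hA hc'.2)) (sdiff_subset.trans sdiff_subset), ?_⟩
      have : (((R ∆ {c}) ∪ ((X \ A) \ W)) ∆ R) ∩ A ⊆ {c} := by
        intro z
        simp only [mem_inter, mem_union, mem_symmDiff, mem_sdiff, mem_singleton]
        clear * -
        tauto
      exact (card_le_card this).trans (by simp)
    rw [mem_Dx] at h1
    have h2 : ∃ H ∈ F, ∀ z, z ≠ x → (z ∈ H ↔ z ∈ (R ∆ {c}) ∪ ((X \ A) \ W)) := by
      rcases h1 with h | ⟨_, h | h⟩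
      · exact ⟨_, h.2.1, fun z _ => Iff.rfl⟩
      · exact ⟨_, h, fun z _ => Iff.rfl⟩
      · exact ⟨_, h, fun z hz => by rw [mem_insert]; tauto⟩
    obtain ⟨H, hH, hH2⟩ := h2
    refine ⟨H, hH, ?_, ?_⟩
    · intro z hz
      have hz' := mem_erase.1 hz
      rw [hH2 z hz'.1]
      have := hz'.2
      simp only [mem_union, mem_symmDiff, mem_sdiff, mem_singleton]
      clear * - this
      tauto
    · intro z hzX hzA
      have hzx : z ≠ x := by rintro rfl; exact hzA hxA
      have hzR : z ∉ R := fun h => hzA (hR h)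
      have hzc : z ≠ c := by rintro rfl; exact hzA hc'.2
      rw [hH2 z hzx]
      simp only [mem_union, mem_symmDiff, mem_sdiff, mem_singleton]
      clear * - hzX hzA hzR hzc
      tauto
  have hchain : ∀ S : Finset α, S ⊆ A.erase x → ∃ P N, K X F S.card P N ∧
      ∀ c ∈ S, (c ∈ R → c ∉ P) ∧ (c ∉ R → c ∉ N) := by
    intro S
    induction S using Finset.induction_on with
    | empty => intro _; exact ⟨X, X, ⟨rfl, rfl⟩, by simp⟩
    | insert s S hs ih =>
      intro hS
      have hsA := hS (mem_insert_self _ _)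
      obtain ⟨P, N, hK, hPN⟩ := ih (fun z hz => hS (mem_insert_of_mem hz))
      obtain ⟨H, hH, hH1, -⟩ := hex s hsA ∅
      refine ⟨P ∩ H, N \ H, by rw [card_insert_of_notMem hs]; exact K_add hH hK, ?_⟩
      intro c hc
      rw [mem_insert] at hc
      rcases hc with rfl | hc
      · have := hH1 c hsA
        simp only [mem_inter, mem_sdiff]
        tauto
      · have := hPN c hc
        simp only [mem_inter, mem_sdiff]
        tauto
  have hcontra : ∀ E1 ∈ F, ∀ E2 ∈ F, ∀ a ∈ A.erase x, ∀ b ∈ A.erase x, a ≠ b → x ∈ E1 → x ∉ E2 →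
      Qd (A.erase x) R E1 a → Qd (A.erase x) R E2 b → False := by
    intro E1 hE1 E2 hE2 a ha b hb hab hx1 hx2 hQ1 hQ2
    have hcA : (((A.erase x).erase a).erase b).card = r + t - 3 := by
      rw [card_erase_of_mem (mem_erase.2 ⟨Ne.symm hab, hb⟩), card_erase_of_mem ha, hA0c]
      omega
    obtain ⟨S, hS1, hS2⟩ := exists_subset_card_eq (s := ((A.erase x).erase a).erase b) (n := r - 2) (by omega)
    obtain ⟨c, hc⟩ := card_pos.1 (show 0 < S.card by omega)
    have hSA : S ⊆ A.erase x := hS1.trans ((erase_subset _ _).trans (erase_subset _ _))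
    obtain ⟨P, N, hK, hPN⟩ := hchain (S.erase c) ((erase_subset _ _).trans hSA)
    obtain ⟨H, hH, hH1, hH2⟩ := hex c (hSA hc) E1
    have hK' := K_add hE1 (K_add hE2 (K_add hH hK))
    rw [card_erase_of_mem hc, show S.card - 1 + 1 + 1 + 1 = r by omega] at hK'
    have h5 := hU _ _ hK'
    have hKs := K_sub hK'
    have h6 : P ∩ H ∩ E2 ∩ E1 ∪ ((N \ H) \ E2) \ E1 ⊆ ((A.erase x).erase a).erase b \ S := by
      intro z hz
      have hzX : z ∈ X := by
        rcases mem_union.1 hz with h | h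
        exacts [hKs.1 h, hKs.2 h]
      have hz1 : (z ∈ P ∧ z ∈ H ∧ z ∈ E2 ∧ z ∈ E1) ∨ (z ∈ N ∧ z ∉ H ∧ z ∉ E2 ∧ z ∉ E1) := by
        simp only [mem_union, mem_inter, mem_sdiff] at hz; tauto
      clear hz
      have hzx : z ≠ x := by rintro rfl; tauto
      have hzA : z ∈ A := by
        by_contra hzA
        have := hH2 z hzX hzA
        tauto
      have hz0 : z ∈ A.erase x := mem_erase.2 ⟨hzx, hzA⟩
      have q1 := hQ1 z hz0
      have q2 := hQ2 z hz0
      have q3 := hH1 z hz0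
      have hza : z ≠ a := by rintro rfl; tauto
      have hzb : z ≠ b := by rintro rfl; tauto
      rw [mem_sdiff, mem_erase, mem_erase]
      refine ⟨⟨hzb, hza, hz0⟩, fun hzS => ?_⟩
      by_cases hzc : z = c
      · tauto
      · have := hPN z (mem_erase.2 ⟨hzc, hzS⟩)
        tauto
    have h7 := card_le_card h6
    rw [card_sdiff_of_subset hS1] at h7
    omega
  have hcontra2 : ∀ E1 ∈ F, ∀ E2 ∈ F, ∀ a ∈ A.erase x, ∀ b ∈ A.erase x, x ∈ E1 → x ∉ E2 →
      Qd (A.erase x) R E1 a → Qd (A.erase x) R E2 b → False := by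
    intro E1 hE1 E2 hE2 a ha b hb hx1 hx2 hQ1 hQ2
    by_cases hab : a = b
    · subst hab
      obtain ⟨c, hc⟩ := card_pos.1 (show 0 < ((A.erase x).erase a).card by
        rw [card_erase_of_mem ha]; omega)
      rw [mem_erase] at hc
      obtain ⟨H, hH, hH1, -⟩ := hex c hc.2 ∅
      by_cases hxH : x ∈ H
      · exact hcontra H hH E2 hE2 c hc.2 a ha hc.1 hxH hx2 hH1 hQ2
      · exact hcontra E1 hE1 H hH a ha c hc.2 hc.1.symm hx1 hxH hQ1 hH1
    · exact hcontra E1 hE1 E2 hE2 a ha b hb hab hx1 hx2 hQ1 hQ2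
  by_cases hplus : ∃ E ∈ F, ∃ a ∈ A.erase x, x ∈ E ∧ Qd (A.erase x) R E a
  · obtain ⟨E1, hE1, a, ha, hx1, hQ1⟩ := hplus
    apply fin (insert x R) (insert_subset hxA hR)
    intro E hE
    rw [mem_Fam]
    refine ⟨hsub E hE, ?_⟩
    by_cases hxE : x ∈ E
    · refine (card_le_card ?_).trans (hd0 E hE)
      intro z
      simp only [mem_inter, mem_symmDiff, mem_erase, mem_insert]
      by_cases hz : z = x
      · subst hz; simp [hxE]
      · simp [hz]
    · have h1 : (E ∆ R) ∩ A.erase x = ∅ := by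
        by_contra hne
        have h2 := hd0 E hE
        have h3 := card_pos.2 (nonempty_iff_ne_empty.2 hne)
        obtain ⟨b, hb⟩ := card_eq_one.1 (by omega : ((E ∆ R) ∩ A.erase x).card = 1)
        obtain ⟨hb1, hb2⟩ := hQ E b hb
        exact hcontra2 E1 hE1 E hE a ha b hb1 hx1 hxE hQ1 hb2
      have h2 : (E ∆ insert x R) ∩ A ⊆ {x} := by
        intro z hz
        have h3 : z ∉ (E ∆ R) ∩ A.erase x := by rw [h1]; simp
        simp only [mem_inter, mem_symmDiff, mem_erase, mem_insert, mem_singleton] at *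
        tauto
      exact (card_le_card h2).trans (by simp)
  · apply fin R hR
    intro E hE
    rw [mem_Fam]
    refine ⟨hsub E hE, ?_⟩
    by_cases hxE : x ∈ E
    · have h1 : (E ∆ R) ∩ A.erase x = ∅ := by
        by_contra hne
        have h2 := hd0 E hE
        have h3 := card_pos.2 (nonempty_iff_ne_empty.2 hne)
        obtain ⟨b, hb⟩ := card_eq_one.1 (by omega : ((E ∆ R) ∩ A.erase x).card = 1)
        obtain ⟨hb1, hb2⟩ := hQ E b hb
        exact hplus ⟨E, hE, b, hb1, hxE, hb2⟩
      have h2 : (E ∆ R) ∩ A ⊆ {x} := by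
        intro z hz
        have h3 : z ∉ (E ∆ R) ∩ A.erase x := by rw [h1]; simp
        simp only [mem_inter, mem_symmDiff, mem_erase, mem_singleton] at *
        tauto
      exact (card_le_card h2).trans (by simp)
    · refine (card_le_card ?_).trans (hd0 E hE)
      intro z
      simp only [mem_inter, mem_symmDiff, mem_erase]
      by_cases hz : z = x
      · subst hz; simp [hxE, hxR]
      · simp [hz]

lemma J_to_K {X : Finset α} {F : Finset (Finset α)} : ∀ {r : ℕ} {U : Finset α}, J F r U →
    ∃ P, K X F r P (X \ U)
  | 0, U, h => by
    simp only [J] at h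
    subst h
    exact ⟨X, rfl, by simp⟩
  | r + 1, _, ⟨E, hE, V, hV, rfl⟩ => by
    obtain ⟨P, hK⟩ := J_to_K (X := X) hV
    refine ⟨P ∩ E, ?_⟩
    have := K_add hE hK
    rwa [sdiff_sdiff_left, sup_eq_union, union_comm] at this

lemma Agr.un {X : Finset α} {F : Finset (Finset α)} {r t : ℕ} (hr : 2 ≤ r) (hdn : Dn F)
    (h : Agr r t X F) : Un r t X F := by
  obtain ⟨s, rfl⟩ : ∃ s, r = s + 2 := ⟨r - 2, by omega⟩
  rintro _ ⟨E, hE, _, ⟨E2, hE2, V, hV, rfl⟩, rfl⟩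
  obtain ⟨P, hK⟩ := J_to_K (X := X) hV
  have h1 := h _ _ (K_add (hdn E hE (E \ E2) sdiff_subset) (K_add hE2 hK))
  refine h1.trans (card_le_card ?_)
  intro z
  simp only [mem_union, mem_inter, mem_sdiff]
  tauto

theorem agr_main : ∀ (M : ℕ) (X : Finset α) (F : Finset (Finset α)),
    X.card + ∑ E ∈ F, E.card ≤ M → ∀ r t : ℕ, 3 ≤ r → 1 ≤ t → r + t + 2 ≤ 2 ^ r →
    (∀ E ∈ F, E ⊆ X) → NT X F → Agr r t X F →
    mu X F ≤ ((r + t + 1 : ℕ) : ℚ) / 2 ^ (r + t) ∧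
    (mu X F = ((r + t + 1 : ℕ) : ℚ) / 2 ^ (r + t) →
      ∃ A R, A ⊆ X ∧ R ⊆ A ∧ A.card = r + t ∧ F = Fam X A R) := by
  intro M
  induction M using Nat.strong_induction_on with
  | _ M ih =>
  intro X F hM r t hr ht1 ht hsub hN hU
  by_cases hfix : ∀ x ∈ X, Dx x F = F
  · have hdn : Dn F := by
      have h1 : ∀ T E : Finset α, E ∈ F → E \ T ∈ F := by
        intro T
        induction T using Finset.induction_on with
        | empty => intro E hE; simpa using hE
        | insert x T hxT ihT =>
          intro E hE
          have h2 := ihT E hE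
          by_cases hx : x ∈ E
          · have h3 := erase_mem_Dx (x := x) h2
            rw [hfix x (hsub E hE hx)] at h3
            convert h3 using 1
            ext z; simp only [mem_sdiff, mem_insert, mem_erase]; tauto
          · convert h2 using 1
            ext z; simp only [mem_sdiff, mem_insert]
            constructor
            · tauto
            · rintro ⟨h, h'⟩
              refine ⟨h, ?_⟩
              rintro (rfl | h4)
              exacts [hx h, h' h4]
      intro E hE E' hE'
      have := h1 (E \ E') E hE
      rwa [Finset.sdiff_sdiff_eq_self hE'] at this
    have hS : Sng X F := by
      intro x hx
      obtain ⟨E, hE, hxE⟩ := (hN x hx).2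
      exact hdn E hE _ (by simpa using hxE)
    have := down_main hr ht1 ht (X := X) _ F le_rfl hsub hdn hS (hU.un (by omega) hdn)
    refine ⟨this.1, fun h => ?_⟩
    obtain ⟨A, hA, hAc, hF⟩ := this.2 h
    refine ⟨A, ∅, hA, by simp, hAc, ?_⟩
    rw [hF]
    ext E
    rw [mem_Fam, mem_Fam0, ← bot_eq_empty, symmDiff_bot]
  push Not at hfix
  obtain ⟨x, hx, hne⟩ := hfix
  have hlt : ∑ E ∈ Dx x F, E.card < ∑ E ∈ F, E.card := by
    refine cmp_weight erase_inj' (fun E => E.card) ?_ hne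
    intro E hE h1
    exact card_erase_lt_of_mem h1
  have hmu : mu X (Dx x F) = mu X F := by unfold mu; rw [card_Dx]
  have hGs : ∀ E ∈ Dx x F, E ⊆ X := by
    intro E hE
    rw [mem_Dx] at hE
    rcases hE with h | ⟨_, h | h⟩
    exacts [hsub _ h.2.1, hsub _ h, (subset_insert _ _).trans (hsub _ h)]
  have hGa := hU.Dx hx
  have hNG : ∀ y ∈ X.erase x, (∃ E ∈ Dx x F, y ∉ E) ∧ (∃ E ∈ Dx x F, y ∈ E) := by
    intro y hy
    rw [mem_erase] at hy
    obtain ⟨⟨E, hE, h1⟩, ⟨E', hE', h2⟩⟩ := hN y hy.2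
    exact ⟨⟨_, erase_mem_Dx hE, by simp [h1]⟩, ⟨_, erase_mem_Dx hE', by simp [h2, hy.1]⟩⟩
  by_cases hxG : ∃ E ∈ Dx x F, x ∈ E
  · have hNT : NT X (Dx x F) := by
      intro y hy
      by_cases hyx : y = x
      · subst hyx
        refine ⟨?_, hxG⟩
        obtain ⟨E, hE, h1⟩ := (hN y hy).1
        exact ⟨_, erase_mem_Dx hE, by simp⟩
      · exact hNG y (mem_erase.2 ⟨hyx, hy⟩)
    have := ih _ (show X.card + ∑ E ∈ Dx x F, E.card < M by omega) X _ le_rfl r t hr ht1 ht hGs hNT hGa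
    rw [hmu] at this
    refine ⟨this.1, fun h => ?_⟩
    obtain ⟨A, R, hA, hR, hAc, hF⟩ := this.2 h
    exact unsquash hr ht1 hx hA hR hAc hsub hU hF
  · push Not at hxG
    have hGs' : ∀ E ∈ Dx x F, E ⊆ X.erase x := fun E hE =>
      subset_erase.2 ⟨hGs E hE, hxG E hE⟩
    have hlt2 : (X.erase x).card + ∑ E ∈ Dx x F, E.card < M := by
      have := card_erase_add_one hx; omega
    have hstrict : mu X F < ((r + t + 1 : ℕ) : ℚ) / 2 ^ (r + t) := by
      rw [← hmu, mu_erase hx]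
      by_cases ht2 : 2 ≤ t
      · obtain ⟨s, rfl⟩ : ∃ s, t = s + 1 := ⟨t - 1, by omega⟩
        have := (ih _ hlt2 _ _ le_rfl r s hr (by omega) (by omega) hGs' hNG (hGa.erase (x := x))).1
        calc mu (X.erase x) (Dx x F) / 2 ≤ ((r + s + 1 : ℕ) : ℚ) / 2 ^ (r + s) / 2 := by gcongr
          _ < _ := by
            rw [← add_assoc, pow_succ, div_div]
            apply div_lt_div_of_pos_right _ (by positivity)
            exact_mod_cast Nat.lt_succ_self _
      obtain rfl : t = 1 := by omega
      obtain ⟨q, rfl⟩ : ∃ s, r = s + 1 := ⟨r - 1, by omega⟩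
      have hA1 : Agr q 1 (X.erase x) (Dx x F) :=
        ((hU.succ (by omega) hN le_rfl).Dx hx).erase (x := x)
      by_cases hq : 3 ≤ q
      · have h2q := two_pow_ge hq
        have := (ih _ hlt2 _ _ le_rfl q 1 hq le_rfl (by omega) hGs' hNG hA1).1
        calc mu (X.erase x) (Dx x F) / 2 ≤ ((q + 1 + 1 : ℕ) : ℚ) / 2 ^ (q + 1) / 2 := by gcongr
          _ < _ := by
            rw [pow_succ _ (q + 1), div_div]
            apply div_lt_div_of_pos_right _ (by positivity)
            exact_mod_cast Nat.lt_succ_self _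
      obtain rfl : q = 2 := by omega
      have := mu_half hGs' (fun E hE hE' => by
        have h1 := hA1 _ _ (K_add hE (K_add hE' (⟨rfl, rfl⟩ : K (X.erase x) (Dx x F) 0 _ _)))
        have e : X.erase x ∩ (X.erase x \ E) ∩ E ∪ (X.erase x \ (X.erase x \ E)) \ E = ∅ := by
          ext z; simp only [mem_union, mem_inter, mem_sdiff, notMem_empty]; tauto
        rw [e] at h1
        simp at h1)
      norm_num
      linarith
    exact ⟨hstrict.le, fun h => absurd h hstrict.ne⟩

end P7

lemma K_to_fun {n : ℕ} (F : Finset (Finset (Fin n))) : ∀ (r : ℕ) (P N : Finset (Fin n)),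
    K univ F r P N → ∃ f : Fin r → Finset (Fin n), (∀ i, f i ∈ F) ∧
      (∀ z, z ∈ P ↔ ∀ i, z ∈ f i) ∧ (∀ z, z ∈ N ↔ ∀ i, z ∉ f i) := by
  intro r
  induction r with
  | zero =>
    intro P N h
    obtain ⟨rfl, rfl⟩ := h
    exact ⟨fun _ => ∅, fun i => i.elim0, fun z => by simp, fun z => by simp⟩
  | succ r ih =>
    intro P N h
    obtain ⟨E, hE, P', N', hK, rfl, rfl⟩ := h
    obtain ⟨f, hf, h1, h2⟩ := ih _ _ hK
    refine ⟨Fin.cons E f, ?_, ?_, ?_⟩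
    · rw [Fin.forall_fin_succ]; simpa using ⟨hE, hf⟩
    · intro z
      rw [Fin.forall_fin_succ]
      simp [h1, and_comm]
    · intro z
      rw [Fin.forall_fin_succ]
      simp [h2, and_comm]

lemma agreeing_to_Agr {n r t : ℕ} {F : Finset (Finset (Fin n))}
    (h : AgreeingFamily n r t F) : Agr r t univ F := by
  intro P N hK
  obtain ⟨f, hf, h1, h2⟩ := K_to_fun F r P N hK
  refine (h f hf).trans (card_le_card ?_)
  intro z hz
  simp only [agreeSet, mem_filter] at hz
  rw [mem_union, h1, h2]
  exact hz.2

lemma mu_of_card {n r t : ℕ} (hn : r + t < n) {F : Finset (Finset (Fin n))}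
    (hcard : F.card = (r + t + 1) * 2 ^ (n - r - t)) :
    mu (univ : Finset (Fin n)) F = ((r + t + 1 : ℕ) : ℚ) / 2 ^ (r + t) := by
  unfold mu
  have h1 : (univ : Finset (Fin n)).card = (r + t) + (n - r - t) := by
    rw [card_univ, Fintype.card_fin]; omega
  rw [h1, hcard]
  generalize n - r - t = d
  rw [pow_add, Nat.cast_mul, Nat.cast_pow, Nat.cast_ofNat]
  exact mul_div_mul_right _ _ (pow_ne_zero _ two_ne_zero)

theorem stmt16 (n r t : ℕ) (hn : r + t < n) (hr : 3 ≤ r) (ht1 : 1 ≤ t)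
    (ht : t < 2 ^ r - r - 1) (F : Finset (Finset (Fin n)))
    (hnt : NonTrivialFamily n F) (hag : AgreeingFamily n r t F)
    (hcard : F.card = (r + t + 1) * 2 ^ (n - r - t)) :
    ∃ A : Finset (Fin n), A.card = r + t ∧ ∃ R ⊆ A,
      F = (Finset.univ.filter (fun B : Finset (Fin n) => (B ∩ A).card ≤ 1)).image
            (fun B => B ∆ R) := by
  have hNT : NT (univ : Finset (Fin n)) F := fun x _ => ⟨hnt.1 x, hnt.2 x⟩
  obtain ⟨A, R, -, hRA, hA, hF⟩ := (agr_main _ univ F le_rfl r t hr ht1 (by omega)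
    (fun E _ => subset_univ E) hNT (agreeing_to_Agr hag)).2 (mu_of_card hn hcard)
  refine ⟨A, hA, R, hRA, ?_⟩
  ext E
  rw [hF, mem_Fam, mem_image]
  constructor
  · rintro ⟨-, h⟩
    refine ⟨E ∆ R, ?_, ?_⟩
    · rw [mem_filter]
      refine ⟨mem_univ _, ?_⟩
      convert h
    · exact symmDiff_symmDiff_cancel_right R E
  · rintro ⟨B, hB, rfl⟩
    refine ⟨subset_univ _, ?_⟩
    rw [mem_filter] at hB
    have h := hB.2
    have e : (B ∆ R) ∆ R = B := symmDiff_symmDiff_cancel_right R B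
    convert h
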